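/- arXiv:2501.10700 — 3 statements merged into one kernel-verified Lean document; each statement's English description precedes it below -/
import Mathlib

section
/- Let m, m' ≥ 2 and n = m·m'. A function c : (Fin n → ZMod 2) → ZMod 2 satisfies c ∈ C and wt(c) = 2^{n−2} if and only if there exist row vectors a₁, a₂ ∈ (Fin n → ZMod 2) and scalars b₁, b₂ ∈ ZMod 2 such that: (i) c(x) = (Σ_{i} a₁(i)·x(i) + b₁ + 1)·(Σ_{j} a₂(j)·x(j) + b₂ + 1) for all x; (ii) the 2×n matrix A with rows a₁, a₂ has rank 2 (equivalently, a₁ and a₂ are linearly independent); and (iii) for every i ∈ {1,…,m}, the block submatrix A_i has rank at most 1. -/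
/-- Monomial evaluation: `mon_S(α) = ∏_{i ∈ S} α i`. -/
def mon {n : ℕ} (S : Finset (Fin n)) : (Fin n → ZMod 2) → ZMod 2 :=
  fun x => ∏ i ∈ S, x i

/-- The Reed–Muller code `RM(r, n)` : span of the monomials of degree at most `r`. -/
def RMcode (r n : ℕ) : Submodule (ZMod 2) ((Fin n → ZMod 2) → ZMod 2) :=
  Submodule.span (ZMod 2) {c | ∃ S : Finset (Fin n), S.card ≤ r ∧ c = mon S}

/-- The second-order recursive subproduct code `C = RM(1,m')^{⊗[2,m]}` of length `2^{m·m'}`: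
span of the monomials `mon_S` with `|S| ≤ 2` and `|S ∩ Bᵢ| ≤ 1` for every block
`Bᵢ = {(i−1)·m', …, i·m'−1}` (an index `i : Fin (m·m')` lies in block `(i : ℕ) / m'`). -/
def Ccode (m m' : ℕ) : Submodule (ZMod 2) ((Fin (m * m') → ZMod 2) → ZMod 2) :=
  Submodule.span (ZMod 2) {c | ∃ S : Finset (Fin (m * m')),
    S.card ≤ 2 ∧ (∀ b : ℕ, (S.filter fun i : Fin (m * m') => (i : ℕ) / m' = b).card ≤ 1) ∧ c = mon S}

/-- Hamming weight: the number of evaluation points where `c` takes the value `1`. -/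
def wt {n : ℕ} (c : (Fin n → ZMod 2) → ZMod 2) : ℕ :=
  (Finset.univ.filter fun x => c x = 1).card

/-- The `2 × m'` submatrix `A_b` of a `2 × (m·m')` matrix `A`, formed by the columns
indexed by block `B_b` (the indices `i` with `(i : ℕ) / m' = b`). -/
def blockMat (m m' : ℕ) (A : Matrix (Fin 2) (Fin (m * m')) (ZMod 2)) (b : ℕ) :
    Matrix (Fin 2) {i : Fin (m * m') // (i : ℕ) / m' = b} (ZMod 2) :=
  A.submatrix id Subtype.val

/-! Over `ZMod 2` every codeword of `C` is `Q + e` for a quadratic form `Q` and a constant `e`, and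
its weight is determined by the exponential sum `∑ x, (-1) ^ Q x`. Squaring this sum and translating
one of the variables gives `2 ^ n * ∑ a, (-1) ^ Q a`, with `a` running over the kernel of the polar
form. On that kernel `Q` is additive, so if the sum is nonzero, `Q` vanishes there and the kernel is
the radical of `Q`. Weight `2 ^ (n - 2)` thus forces the radical to have index `4`; the support is
then a coset of the radical, that is, the solution set of two independent affine equations.

The coefficient of `x i * x j` in `Q` is the value of the polar form at the basis vectors `i`, `j`.
For a product of two affine forms this is the minor on columns `i`, `j` of the matrix formed by
their linear parts, so the product lies in `C` if and only if all minors inside a block vanish. -/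

open Finset Matrix QuadraticMap

section ExponentialSums

/-- The sign character `a ↦ (-1) ^ a` of `ZMod 2`. It is `ℤ`-valued so that its sums can be
compared with cardinalities. -/
def signChar : AddChar (ZMod 2) ℤ :=
  AddChar.zmodChar 2 (ζ := -1) (by norm_num)

lemma signChar_eq_one_iff {a : ZMod 2} : signChar a = 1 ↔ a = 0 := by
  decide +revert

lemma signChar_sq (a : ZMod 2) : signChar a ^ 2 = 1 := by
  decide +revert

lemma sum_signChar {X : Type*} [Fintype X] (f : X → ZMod 2) :
    ∑ x, signChar (f x) = Fintype.card X - 2 * #{x | f x = 1} := by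
  have signChar_eq (a : ZMod 2) : signChar a = 1 - 2 * if a = 1 then 1 else 0 := by
    decide +revert
  simp only [signChar_eq, Finset.sum_sub_distrib, ← Finset.mul_sum, Finset.sum_boole]
  simp

lemma sum_signChar_addMonoidHom {V F : Type*} [AddCommGroup V] [Fintype V] [FunLike F V (ZMod 2)]
    [AddMonoidHomClass F V (ZMod 2)] (l : F) :
    ∑ x, signChar (l x) = if ∀ x, l x = 0 then (Fintype.card V : ℤ) else 0 := by
  classical
  have trivial_iff : signChar.compAddMonoidHom (l : V →+ ZMod 2) = 0 ↔ ∀ x, l x = 0 := by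
    simp [DFunLike.ext_iff, signChar_eq_one_iff]
  simpa [trivial_iff] using AddChar.sum_eq_ite (signChar.compAddMonoidHom (l : V →+ ZMod 2))

end ExponentialSums

section PolarForms

lemma polar_linMulLin {R M : Type*} [CommRing R] [AddCommGroup M] [Module R M]
    (f g : M →ₗ[R] R) (x y : M) :
    polar (linMulLin f g) x y = f x * g y + f y * g x := by
  simp only [polar, linMulLin_apply, map_add]
  ring

lemma zmod_two_mul_self (a : ZMod 2) : a * a = a := by
  decide +revert

lemma exists_quadraticForm_affine_mul {M : Type*} [AddCommGroup M] [Module (ZMod 2) M]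
    (f g : M →ₗ[ZMod 2] ZMod 2) (s t : ZMod 2) :
    ∃ Q : QuadraticForm (ZMod 2) M, (∀ x, (f x + s) * (g x + t) = Q x + s * t) ∧
      ∀ x y, polar Q x y = f x * g y + f y * g x := by
  refine ⟨linMulLin f g + t • linMulLin f f + s • linMulLin g g, fun x => ?_, fun x y => ?_⟩
  · simp only [_root_.add_apply, _root_.smul_apply, linMulLin_apply, smul_eq_mul,
      zmod_two_mul_self]
    ring
  · simp only [FunLike.coe_add, FunLike.coe_smul, polar_add, polar_smul, polar_linMulLin,
      smul_eq_mul]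
    linear_combination CharTwo.add_self_eq_zero (t * (f x * f y) + s * (g x * g y))

lemma quadraticForm_eq_sum {R ι : Type*} [CommRing R] [Fintype ι] [DecidableEq ι]
    (Q : QuadraticForm R (ι → R)) :
    ⇑Q = ∑ i, Q (Pi.single i 1) • (fun x => x i * x i) +
      ∑ p ∈ univ.sym2 with ¬ p.IsDiag,
        polarSym2 Q (p.map fun i => Pi.single i 1) • fun x => (p.map x).mul := by
  ext x
  let basis : ι → ι → R := fun i => Pi.single i 1
  calc Q x = Q (∑ i, (x • basis) i) := by
        congr 1
        simpa using pi_eq_sum_univ' x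
    _ = ∑ i, Q ((x • basis) i) + ∑ p ∈ univ.sym2 with ¬ p.IsDiag, polarSym2 Q (p.map (x • basis)) :=
        Q.map_sum univ (x • basis)
    _ = _ := by
        simp_rw [polarSym2_map_smul]
        simp [Q.map_smul, basis, mul_comm]

end PolarForms

section QuadraticForms

variable {V : Type*} [AddCommGroup V] [Module (ZMod 2) V]

lemma map_add_of_mem_ker_polarBilin {Q : QuadraticForm (ZMod 2) V} {a : V}
    (ha : a ∈ LinearMap.ker Q.polarBilin) (x : V) : Q (a + x) = Q a + Q x := by
  rw [QuadraticMap.map_add Q, ← polarBilin_apply_apply, LinearMap.mem_ker.1 ha,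
    LinearMap.zero_apply, add_zero]

variable [Fintype V]

open scoped Classical in
lemma sq_sum_signChar_quadraticForm (Q : QuadraticForm (ZMod 2) V) :
    (∑ x, signChar (Q x)) ^ 2 =
      Fintype.card V * ∑ a : LinearMap.ker Q.polarBilin, signChar (Q a) := by
  have translate (a x : V) : signChar (Q x) * signChar (Q (a + x)) =
      signChar (Q a) * signChar (Q.polarBilin a x) := by
    rw [← AddChar.map_add_eq_mul, ← AddChar.map_add_eq_mul, QuadraticMap.map_add Q,
      polarBilin_apply_apply]
    congr 1
    linear_combination CharTwo.add_self_eq_zero (Q x)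
  calc (∑ x, signChar (Q x)) ^ 2
      = ∑ x, ∑ a, signChar (Q x) * signChar (Q (a + x)) := by
        rw [pow_two, Finset.sum_mul_sum]
        exact Finset.sum_congr rfl fun x _ => (Equiv.sum_comp (Equiv.addRight x) _).symm
    _ = ∑ a, signChar (Q a) * ∑ x, signChar (Q.polarBilin a x) := by
        simp only [translate, Finset.mul_sum]
        exact Finset.sum_comm
    _ = ∑ a, if a ∈ LinearMap.ker Q.polarBilin then Fintype.card V * signChar (Q a) else 0 := by
        refine Finset.sum_congr rfl fun a _ => ?_
        have mem_ker_iff : (∀ x, Q.polarBilin a x = 0) ↔ a ∈ LinearMap.ker Q.polarBilin := by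
          simp [LinearMap.ext_iff]
        simp only [sum_signChar_addMonoidHom, mem_ker_iff, mul_ite, mul_zero]
        rw [mul_comm]
    _ = Fintype.card V * ∑ a : LinearMap.ker Q.polarBilin, signChar (Q a) := by
        rw [← Finset.sum_filter, Finset.mul_sum]
        exact Finset.sum_subtype _ (by simp) _

lemma sq_sum_signChar_eq_card_mul_card_radical {Q : QuadraticForm (ZMod 2) V}
    (hQ : ∑ x, signChar (Q x) ≠ 0) :
    (∑ x, signChar (Q x)) ^ 2 = Fintype.card V * Nat.card Q.radical := by
  classical
  let q : LinearMap.ker Q.polarBilin →+ ZMod 2 :=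
    .mk' (fun a => Q a) fun a b => map_add_of_mem_ker_polarBilin a.2 b
  have hsum := sq_sum_signChar_quadraticForm Q
  rw [show ∑ a : LinearMap.ker Q.polarBilin, signChar (Q a) = _ from
    sum_signChar_addMonoidHom q] at hsum
  have hq : ∀ a, q a = 0 := by
    by_contra hq
    rw [if_neg hq, mul_zero] at hsum
    exact hQ (pow_eq_zero_iff two_ne_zero |>.1 hsum)
  have radical_eq : Q.radical = LinearMap.ker Q.polarBilin := by
    refine le_antisymm radical_le_ker_polarBilin fun a ha => ?_
    have hQa : Q a = 0 := hq ⟨a, ha⟩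
    exact mem_radical_iff'.2 ⟨hQa, by simp [map_add_of_mem_ker_polarBilin ha, hQa]⟩
  rw [hsum, if_pos hq, radical_eq, Nat.card_eq_fintype_card]

lemma four_mul_card_radical {Q : QuadraticForm (ZMod 2) V} {e : ZMod 2}
    (hQ : 4 * #{x | Q x + e = 1} = Fintype.card V) :
    4 * Nat.card Q.radical = Fintype.card V := by
  have hsum := sum_signChar fun x => Q x + e
  simp only [AddChar.map_add_eq_mul, ← Finset.sum_mul] at hsum
  have hV : (0 : ℤ) < Fintype.card V := mod_cast Fintype.card_pos
  have hw : 4 * (#{x | Q x + e = 1} : ℤ) = Fintype.card V := mod_cast hQ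
  have hne : ∑ x, signChar (Q x) ≠ 0 := by
    intro h
    rw [h] at hsum
    linarith
  have hsq : 4 * (∑ x, signChar (Q x)) ^ 2 = (Fintype.card V : ℤ) ^ 2 := by
    have := congrArg (· ^ 2) hsum
    simp only [mul_pow, signChar_sq, mul_one] at this
    rw [this, ← hw]
    ring
  rw [sq_sum_signChar_eq_card_mul_card_radical hne, mul_left_comm, pow_two] at hsq
  exact_mod_cast mul_left_cancel₀ hV.ne' hsq

lemma exists_add_eq_one_iff_sub_mem_radical {Q : QuadraticForm (ZMod 2) V} {e : ZMod 2}
    (hQ : 4 * #{x | Q x + e = 1} = Fintype.card V) :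
    ∃ x₀, ∀ x, Q x + e = 1 ↔ x - x₀ ∈ Q.radical := by
  classical
  obtain ⟨x₀, hx₀⟩ : ({x | Q x + e = 1} : Finset V).Nonempty := by
    rw [← Finset.card_pos]
    have : 0 < Fintype.card V := Fintype.card_pos
    omega
  have hcoset : ({x | x - x₀ ∈ Q.radical} : Finset V) ⊆ ({x | Q x + e = 1} : Finset V) := by
    intro x hx
    simp only [mem_filter_univ] at hx hx₀ ⊢
    rwa [← sub_add_cancel x x₀, (mem_radical_iff'.1 hx).2]
  have hcard : #{x | x - x₀ ∈ Q.radical} = Nat.card Q.radical := by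
    rw [Nat.card_eq_fintype_card, Fintype.card_subtype]
    exact Finset.card_equiv (Equiv.subRight x₀) (by simp)
  have := Finset.eq_of_subset_of_card_le hcoset (by have := four_mul_card_radical hQ; omega)
  exact ⟨x₀, fun x => by simpa using (Finset.ext_iff.1 this x).symm⟩

end QuadraticForms

section Matrices

variable {K ι : Type*} [Field K] [Fintype ι]

lemma rank_le_one_iff_minors_eq {A : Matrix (Fin 2) ι K} :
    A.rank ≤ 1 ↔ ∀ i j, A 0 i * A 1 j = A 0 j * A 1 i := by
  constructor
  · intro hA i j
    by_contra hne
    have hdet : (A.submatrix id ![i, j]).det ≠ 0 := by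
      simpa [Matrix.det_fin_two, sub_eq_zero] using hne
    have hrank := rank_of_det_ne_zero hdet
    have hle := A.rank_submatrix_le id ![i, j]
    simp only [Fintype.card_fin] at hrank
    omega
  · intro hA
    suffices ∃ u v, A = vecMulVec u v by
      obtain ⟨u, v, rfl⟩ := this
      exact rank_vecMulVec_le u v
    by_cases hrow : ∃ i, A 0 i ≠ 0
    · obtain ⟨i, hi⟩ := hrow
      refine ⟨![1, A 1 i / A 0 i], A 0, ?_⟩
      ext k j
      fin_cases k
      · simp [vecMulVec]
      · have entry_eq : A 1 j = A 1 i / A 0 i * A 0 j := by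
          field_simp
          linear_combination hA i j
        simpa [vecMulVec] using entry_eq
    · push Not at hrow
      refine ⟨![0, 1], A 1, ?_⟩
      ext k j
      fin_cases k <;> simp [vecMulVec, hrow]

lemma mulVec_surjective_of_rank_eq {κ : Type*} [Fintype κ] {A : Matrix κ ι K}
    (hA : A.rank = Fintype.card κ) : Function.Surjective A.mulVec := by
  have range_eq : LinearMap.range A.mulVecLin = ⊤ := Submodule.eq_top_of_finrank_eq <| by
    rw [← Matrix.rank, hA, Module.finrank_fintype_fun_eq_card]
  exact LinearMap.range_eq_top.1 range_eq

lemma card_mulVec_eq_mul_card_pow {κ : Type*} [Fintype κ] [Fintype K] [DecidableEq K]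
    [DecidableEq ι] {A : Matrix κ ι K} (hA : A.rank = Fintype.card κ) (b : κ → K) :
    #{x | A *ᵥ x = b} * Fintype.card K ^ Fintype.card κ = Fintype.card K ^ Fintype.card ι := by
  classical
  have hsurj := mulVec_surjective_of_rank_eq hA
  calc #{x | A *ᵥ x = b} * Fintype.card K ^ Fintype.card κ
      = ∑ y : κ → K, #{x | A *ᵥ x = y} := by
        have fiber_card (y : κ → K) : #{x | A *ᵥ x = y} = #{x | A *ᵥ x = b} :=
          AddMonoidHom.card_fiber_eq_of_mem_range A.mulVecLin (hsurj y) (hsurj b)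
        simp [fiber_card, mul_comm]
    _ = Fintype.card K ^ Fintype.card ι := by
        rw [← Fintype.card_fun, ← Finset.card_univ]
        exact (Finset.card_eq_sum_card_fiberwise (by simp)).symm

lemma exists_rank_eq_mulVec_eq_zero_iff {r : ℕ} (W : Submodule K (ι → K))
    (hW : Module.finrank K W + r = Fintype.card ι) :
    ∃ A : Matrix (Fin r) ι K, A.rank = r ∧ ∀ x, A *ᵥ x = 0 ↔ x ∈ W := by
  classical
  have hquot : Module.finrank K ((ι → K) ⧸ W) = Module.finrank K (Fin r → K) := by
    have := W.finrank_quotient_add_finrank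
    rw [Module.finrank_fintype_fun_eq_card] at this
    rw [Module.finrank_fin_fun]
    omega
  let e := LinearEquiv.ofFinrankEq _ _ hquot
  let L : (ι → K) →ₗ[K] Fin r → K := e.toLinearMap ∘ₗ W.mkQ
  have hsurj : Function.Surjective L := e.surjective.comp W.mkQ_surjective
  have hL : (LinearMap.toMatrix' L).mulVecLin = L := Matrix.toLin'_toMatrix' L
  refine ⟨LinearMap.toMatrix' L, ?_, fun x => ?_⟩
  · rw [Matrix.rank, hL, LinearMap.range_eq_top.2 hsurj, finrank_top, Module.finrank_fin_fun]
  · rw [← Matrix.mulVecLin_apply, hL]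
    simp [L]

end Matrices

section AffineProducts

variable {ι : Type*} [Fintype ι]

lemma affine_mul_eq_one_iff {a₁ a₂ x : ι → ZMod 2} {b₁ b₂ : ZMod 2} :
    (a₁ ⬝ᵥ x + b₁ + 1) * (a₂ ⬝ᵥ x + b₂ + 1) = 1 ↔ of ![a₁, a₂] *ᵥ x = ![b₁, b₂] := by
  have mul_eq_one_iff (s t b₁ b₂ : ZMod 2) :
      (s + b₁ + 1) * (t + b₂ + 1) = 1 ↔ s = b₁ ∧ t = b₂ := by
    decide +revert
  rw [mul_eq_one_iff, funext_iff, Fin.forall_fin_two]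
  rfl

lemma card_affine_mul_eq_one [DecidableEq ι] {a₁ a₂ : ι → ZMod 2}
    (ha : (of ![a₁, a₂]).rank = 2) (b₁ b₂ : ZMod 2) :
    #{x | (a₁ ⬝ᵥ x + b₁ + 1) * (a₂ ⬝ᵥ x + b₂ + 1) = 1} = 2 ^ (Fintype.card ι - 2) := by
  have hcard := card_mulVec_eq_mul_card_pow (by simpa using ha) ![b₁, b₂]
  have hle : 2 ≤ Fintype.card ι := ha ▸ rank_le_card_width _
  simp only [affine_mul_eq_one_iff, ZMod.card, Fintype.card_fin] at hcard ⊢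
  rw [← Nat.sub_add_cancel hle, pow_add] at hcard
  exact Nat.eq_of_mul_eq_mul_right (by norm_num) hcard

lemma exists_affine_mul_of_card_eq [DecidableEq ι] (hι : 2 ≤ Fintype.card ι)
    {Q : QuadraticForm (ZMod 2) (ι → ZMod 2)} {e : ZMod 2}
    (hQ : #{x | Q x + e = 1} = 2 ^ (Fintype.card ι - 2)) :
    ∃ (a₁ a₂ : ι → ZMod 2) (b₁ b₂ : ZMod 2),
      (∀ x, Q x + e = (a₁ ⬝ᵥ x + b₁ + 1) * (a₂ ⬝ᵥ x + b₂ + 1)) ∧ (of ![a₁, a₂]).rank = 2 := by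
  have hcard : 4 * #{x | Q x + e = 1} = Fintype.card (ι → ZMod 2) := by
    rw [hQ, Fintype.card_fun, ZMod.card, ← Nat.pow_sub_mul_pow 2 hι, mul_comm]
  have hrad : Module.finrank (ZMod 2) Q.radical + 2 = Fintype.card ι := by
    have := four_mul_card_radical hcard
    rw [Module.natCard_eq_pow_finrank (K := ZMod 2), Nat.card_zmod, Fintype.card_fun, ZMod.card,
      mul_comm, show 4 = 2 ^ 2 from rfl, ← pow_add] at this
    exact Nat.pow_right_injective le_rfl this
  obtain ⟨x₀, hx₀⟩ := exists_add_eq_one_iff_sub_mem_radical hcard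
  obtain ⟨A, hA, hker⟩ := exists_rank_eq_mulVec_eq_zero_iff Q.radical hrad
  have of_rows : of ![A 0, A 1] = A := by
    ext k j
    fin_cases k <;> rfl
  have of_entries : ![(A *ᵥ x₀) 0, (A *ᵥ x₀) 1] = A *ᵥ x₀ := by
    ext k
    fin_cases k <;> rfl
  refine ⟨A 0, A 1, (A *ᵥ x₀) 0, (A *ᵥ x₀) 1, fun x => ?_, of_rows ▸ hA⟩
  have eq_of_eq_one_iff (u v : ZMod 2) (h : u = 1 ↔ v = 1) : u = v := by
    decide +revert
  apply eq_of_eq_one_iff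
  rw [affine_mul_eq_one_iff, of_rows, of_entries, hx₀, ← hker, mulVec_sub, sub_eq_zero]

end AffineProducts

section BlockCodes

variable {ι κ : Type*}

/-- The code generated by the monomials `∏ i ∈ S, x i` of degree at most two that involve at most
one variable from each block, where the blocks are the fibres of `blk`. -/
def blockCode (blk : ι → κ) : Submodule (ZMod 2) ((ι → ZMod 2) → ZMod 2) :=
  Submodule.span (ZMod 2)
    {c | ∃ S : Finset ι, #S ≤ 2 ∧ Set.InjOn blk S ∧ c = fun x => ∏ i ∈ S, x i}

variable {blk : ι → κ}

lemma one_mem_blockCode : (fun _ => 1) ∈ blockCode blk :=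
  Submodule.subset_span ⟨∅, by simp⟩

lemma mul_mem_blockCode {i j : ι} (hij : blk i = blk j → i = j) :
    (fun x => x i * x j) ∈ blockCode blk := by
  classical
  refine Submodule.subset_span ⟨{i, j}, card_le_two, by simpa [Set.injOn_pair] using hij, ?_⟩
  ext x
  by_cases h : i = j
  · simp [h, zmod_two_mul_self]
  · rw [prod_pair h]

lemma prod_eq_one_or_eq_mul {S : Finset ι} (hS : #S ≤ 2) (hblk : Set.InjOn blk S) :
    ((fun x : ι → ZMod 2 => ∏ i ∈ S, x i) = fun _ => 1) ∨
      ∃ i j, (blk i = blk j → i = j) ∧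
        (fun x : ι → ZMod 2 => ∏ i ∈ S, x i) = fun x => x i * x j := by
  classical
  obtain h | h | h : #S = 0 ∨ #S = 1 ∨ #S = 2 := by omega
  · obtain rfl := card_eq_zero.1 h
    simp
  · obtain ⟨i, rfl⟩ := card_eq_one.1 h
    exact .inr ⟨i, i, fun _ => rfl, by simp [zmod_two_mul_self]⟩
  · obtain ⟨i, j, hij, rfl⟩ := card_eq_two.1 h
    exact .inr ⟨i, j, by simpa [Set.injOn_pair] using hblk, by simp [prod_pair hij]⟩

lemma exists_quadraticForm_of_mem_blockCode [DecidableEq ι] {c : (ι → ZMod 2) → ZMod 2}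
    (hc : c ∈ blockCode blk) :
    ∃ (Q : QuadraticForm (ZMod 2) (ι → ZMod 2)) (e : ZMod 2), (c = fun x => Q x + e) ∧
      ∀ i j, i ≠ j → blk i = blk j → polar Q (Pi.single i 1) (Pi.single j 1) = 0 := by
  induction hc using Submodule.span_induction with
  | mem c hc =>
    obtain ⟨S, hS, hblk, rfl⟩ := hc
    obtain h | ⟨p, q, hpq, h⟩ := prod_eq_one_or_eq_mul hS hblk
    · exact ⟨0, 1, by simp [h], by simp [polar]⟩
    · refine ⟨QuadraticMap.proj p q, 0, by simp [h], fun i j hij hblk => ?_⟩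
      rw [QuadraticMap.proj, polar_linMulLin]
      simp only [LinearMap.proj_apply, Pi.single_apply]
      grind
  | zero => exact ⟨0, 0, by ext; simp, by simp [polar]⟩
  | add c d _ _ hc hd =>
    obtain ⟨Q, e, rfl, hQ⟩ := hc
    obtain ⟨Q', e', rfl, hQ'⟩ := hd
    refine ⟨Q + Q', e + e', by ext; simp [add_add_add_comm], fun i j hij hblk => ?_⟩
    rw [FunLike.coe_add, polar_add, hQ i j hij hblk, hQ' i j hij hblk, add_zero]
  | smul r c _ hc =>
    obtain ⟨Q, e, rfl, hQ⟩ := hc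
    refine ⟨r • Q, r * e, by ext; simp [mul_add], fun i j hij hblk => ?_⟩
    rw [FunLike.coe_smul, polar_smul, hQ i j hij hblk, smul_zero]

lemma quadraticForm_mem_blockCode [Finite ι] [DecidableEq ι]
    {Q : QuadraticForm (ZMod 2) (ι → ZMod 2)}
    (hQ : ∀ i j, i ≠ j → blk i = blk j → polar Q (Pi.single i 1) (Pi.single j 1) = 0) :
    ⇑Q ∈ blockCode blk := by
  cases nonempty_fintype ι
  rw [quadraticForm_eq_sum]
  refine add_mem (sum_mem fun i _ => ?_) (sum_mem fun p hp => ?_)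
  · exact Submodule.smul_mem _ _ (mul_mem_blockCode fun _ => rfl)
  · induction p with | _ i j
    replace hp : i ≠ j := by simpa using hp
    by_cases hblk : blk i = blk j
    · simp [hQ i j hp hblk]
    · simpa using Submodule.smul_mem _ _ (mul_mem_blockCode fun h => absurd h hblk)

lemma quadraticForm_add_mem_blockCode_iff [Finite ι] [DecidableEq ι]
    {Q : QuadraticForm (ZMod 2) (ι → ZMod 2)} {e : ZMod 2} :
    (fun x => Q x + e) ∈ blockCode blk ↔
      ∀ i j, i ≠ j → blk i = blk j → polar Q (Pi.single i 1) (Pi.single j 1) = 0 := by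
  constructor
  · intro h
    obtain ⟨Q', e', heq, hQ'⟩ := exists_quadraticForm_of_mem_blockCode h
    have he : e = e' := by simpa using congrFun heq 0
    obtain rfl : Q = Q' := QuadraticMap.ext fun x => by simpa [he] using congrFun heq x
    exact hQ'
  · intro hQ
    simpa [Pi.add_def, Pi.smul_def] using
      add_mem (quadraticForm_mem_blockCode hQ) ((blockCode blk).smul_mem e one_mem_blockCode)

lemma affine_mul_mem_blockCode_iff [Fintype ι] [DecidableEq κ] {a₁ a₂ : ι → ZMod 2}
    {b₁ b₂ : ZMod 2} :
    (fun x => (a₁ ⬝ᵥ x + b₁ + 1) * (a₂ ⬝ᵥ x + b₂ + 1)) ∈ blockCode blk ↔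
      ∀ k, ((of ![a₁, a₂]).submatrix id (Subtype.val : {i // blk i = k} → ι)).rank ≤ 1 := by
  classical
  obtain ⟨Q, hQ, hpolar⟩ := exists_quadraticForm_affine_mul
    (dotProductBilin (ZMod 2) (ZMod 2) a₁) (dotProductBilin (ZMod 2) (ZMod 2) a₂) (b₁ + 1) (b₂ + 1)
  simp only [dotProductBilin_apply_apply, ← add_assoc] at hQ
  simp only [hQ, quadraticForm_add_mem_blockCode_iff, hpolar, rank_le_one_iff_minors_eq,
    dotProductBilin_apply_apply, dotProduct_single_one, CharTwo.add_eq_zero]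
  constructor
  · rintro h k ⟨i, rfl⟩ ⟨j, hj⟩
    obtain rfl | hij := eq_or_ne i j
    · rfl
    · exact h i j hij hj.symm
  · exact fun h i j _ hblk => h (blk i) ⟨i, rfl⟩ ⟨j, hblk.symm⟩

theorem stmt_6_general [Fintype ι] [DecidableEq ι] [DecidableEq κ] (hι : 2 ≤ Fintype.card ι)
    (blk : ι → κ) (c : (ι → ZMod 2) → ZMod 2) :
    (c ∈ blockCode blk ∧ #{x | c x = 1} = 2 ^ (Fintype.card ι - 2)) ↔
    ∃ (a₁ a₂ : ι → ZMod 2) (b₁ b₂ : ZMod 2),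
      (∀ x, c x = (a₁ ⬝ᵥ x + b₁ + 1) * (a₂ ⬝ᵥ x + b₂ + 1)) ∧
      (of ![a₁, a₂]).rank = 2 ∧
      ∀ k, ((of ![a₁, a₂]).submatrix id (Subtype.val : {i // blk i = k} → ι)).rank ≤ 1 := by
  constructor
  · rintro ⟨hc, hw⟩
    obtain ⟨Q, e, rfl, -⟩ := exists_quadraticForm_of_mem_blockCode hc
    obtain ⟨a₁, a₂, b₁, b₂, hfactor, hrank⟩ := exists_affine_mul_of_card_eq hι hw
    rw [funext hfactor] at hc
    exact ⟨a₁, a₂, b₁, b₂, hfactor, hrank, affine_mul_mem_blockCode_iff.1 hc⟩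
  · rintro ⟨a₁, a₂, b₁, b₂, hfactor, hrank, hblock⟩
    obtain rfl := funext hfactor
    exact ⟨affine_mul_mem_blockCode_iff.2 hblock, card_affine_mul_eq_one hrank b₁ b₂⟩

end BlockCodes

lemma Ccode_eq_blockCode (m m' : ℕ) :
    Ccode m m' = blockCode fun i : Fin (m * m') => (i : ℕ) / m' := by
  have injOn_iff (S : Finset (Fin (m * m'))) :
      Set.InjOn (fun i : Fin (m * m') => (i : ℕ) / m') S ↔
        ∀ b : ℕ, (S.filter fun i : Fin (m * m') => (i : ℕ) / m' = b).card ≤ 1 := by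
    simp only [Set.InjOn, card_le_one, mem_filter, mem_coe]
    exact ⟨fun h b i hi j hj => h hi.1 hj.1 (hi.2.trans hj.2.symm),
      fun h i hi j hj hij => h _ i ⟨hi, rfl⟩ j ⟨hj, hij.symm⟩⟩
  simp only [blockCode, injOn_iff]
  rfl

lemma rank_blockMat_eq_zero_of_le {m m' b : ℕ} (hb : m ≤ b)
    (A : Matrix (Fin 2) (Fin (m * m')) (ZMod 2)) : (blockMat m m' A b).rank = 0 := by
  have : IsEmpty {i : Fin (m * m') // (i : ℕ) / m' = b} :=
    ⟨fun i => (Nat.div_lt_of_lt_mul (i.1.2.trans_eq (mul_comm m m'))).not_ge (hb.trans_eq i.2.symm)⟩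
  simpa using (blockMat m m' A b).rank_le_card_width

/-- characterization of the minimum weight codewords of `C`. -/
theorem stmt_6 (m m' : ℕ) (hm : 2 ≤ m) (hm' : 2 ≤ m')
    (c : (Fin (m * m') → ZMod 2) → ZMod 2) :
    (c ∈ Ccode m m' ∧ wt c = 2 ^ (m * m' - 2)) ↔
    ∃ (a₁ a₂ : Fin (m * m') → ZMod 2) (b₁ b₂ : ZMod 2),
      (∀ x, c x = ((∑ i, a₁ i * x i) + b₁ + 1) * ((∑ j, a₂ j * x j) + b₂ + 1)) ∧
      (Matrix.of ![a₁, a₂]).rank = 2 ∧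
      (∀ b : ℕ, b < m → (blockMat m m' (Matrix.of ![a₁, a₂]) b).rank ≤ 1) := by
  have hcard : 2 ≤ Fintype.card (Fin (m * m')) := by
    rw [Fintype.card_fin]
    exact hm.trans (Nat.le_mul_of_pos_right m (by omega))
  have block_rank_le (A) : (∀ b < m, (blockMat m m' A b).rank ≤ 1) ↔
      ∀ b, (blockMat m m' A b).rank ≤ 1 :=
    ⟨fun h b => (lt_or_ge b m).elim (h b) fun hb => by simp [rank_blockMat_eq_zero_of_le hb],
      fun h b _ => h b⟩
  have characterization := stmt_6_general hcard (fun i => (i : ℕ) / m') c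
  rw [Fintype.card_fin] at characterization
  simp only [Ccode_eq_blockCode, block_rank_le]
  exact characterization
end

section
/- For integers μ ≥ 1 and h, let N₂(μ,h) denote the number of symmetric 2μ×2μ matrices over ZMod 2, with all m diagonal 2×2 blocks zero, that have rank exactly h (so N₂(μ,h) = 0 if h < 0 or h > 2μ, and N₂(μ,0) = 1). Then for every m ≥ 2 and every 1 ≤ h ≤ 2m, the following identity holds in ℚ: N₂(m,h) = t₁·N₂(m−1,h) + t₂·N₂(m−1,h−2) + t₃·N₂(m−1,h−4), where t₁ = 2^{h−1} + 2^{2h−1}, t₂ = 3·2^{2m−4+h} − 5·2^{2h−5} − 2^{h−3}, and t₃ = −3·2^{2m−6+h} + 2^{4m−4} + 2^{2h−7}, with 2^k denoting the rational power of 2 (the exponent k ∈ ℤ may be negative). -/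
/-- `N₂(μ,h)`: the number of symmetric `2μ × 2μ` matrices over `ZMod 2`, with all `μ`
diagonal `2 × 2` blocks zero, of rank exactly `h` (automatically `0` for `h < 0` or
`h > 2μ`). -/
noncomputable def N2 (mu : ℕ) (h : ℤ) : ℕ :=
  Nat.card {B : Matrix (Fin (2 * mu)) (Fin (2 * mu)) (ZMod 2) //
    (∀ i j, B i j = B j i) ∧
    (∀ i j : Fin (2 * mu), (i : ℕ) / 2 = (j : ℕ) / 2 → B i j = 0) ∧
    (B.rank : ℤ) = h}

/-!
Deleting the last `2 × 2` block exhibits `B` as a smaller matrix `A` of the same kind bordered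
twice, first by `u` and then by `(v, 0)`. Bordering an alternating matrix keeps the rank when the
new column lies in the column space and raises it by two otherwise: in the first case the corner
`xᵀAx` forced by the factorisation of the bordered matrix is zero, as `A` is alternating; in the
second neither the new column nor the new row depends on the old ones. Over a field with `q`
elements it remains to count, for `A` of rank `r`, how often `u` lies in the column space of `A`
(`q ^ r` times) and `(v, 0)` in that of `A` bordered by `u`: `q ^ r` times if `u = 0`, and
otherwise `1 / q` of the whole column space, since the last coordinate does not vanish on it.
-/

open Matrix

section Rank

theorem rank_fromBlocks_mul_mul {R l m n o : Type*} [CommRing R] [Fintype m] [Fintype n]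
    [Fintype o] (A : Matrix m n R) (X : Matrix n o R) (Y : Matrix l m R) :
    (fromBlocks A (A * X) (Y * A) (Y * A * X)).rank = A.rank := by
  nontriviality R
  classical
  apply le_antisymm
  · have factor : fromBlocks A (A * X) (Y * A) (Y * A * X) =
        fromRows 1 Y * A * fromCols 1 X := by
      rw [fromRows_mul, fromRows_mul_fromCols]
      simp
    rw [factor]
    exact (rank_mul_le_left _ _).trans (rank_mul_le_right _ _)
  · exact rank_submatrix_le (fromBlocks A (A * X) (Y * A) (Y * A * X)) Sum.inl Sum.inl

variable {K m n : Type*} [Field K] [Fintype n]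

theorem rank_fromCols_replicateCol_of_notMem_range [Finite m] {A : Matrix m n K} {u : m → K}
    (hu : u ∉ LinearMap.range A.mulVecLin) :
    (fromCols A (replicateCol Unit u)).rank = A.rank + 1 := by
  have col_eq : (fromCols A (replicateCol Unit u)).col = Sum.elim A.col fun _ => u := by
    ext (j | j) i <;> rfl
  rw [rank_eq_finrank_span_cols, rank_eq_finrank_span_cols, col_eq, Set.Sum.elim_range,
    Set.range_const, Submodule.span_union, Submodule.finrank_sup_span_singleton]
  rwa [← range_mulVecLin]

theorem rank_fromBlocks_of_notMem_range [Fintype m] {A : Matrix m n K} {u : m → K} {w : n → K}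
    (d : K) (hu : u ∉ LinearMap.range A.mulVecLin) (hw : w ∉ LinearMap.range Aᵀ.mulVecLin) :
    (fromBlocks A (replicateCol Unit u) (replicateRow Unit w) (of fun _ _ => d)).rank =
      A.rank + 2 := by
  have hw' : Sum.elim w (fun _ : Unit => d) ∉
      LinearMap.range (fromCols A (replicateCol Unit u))ᵀ.mulVecLin := by
    rintro ⟨y, hy⟩
    refine hw ⟨y, funext fun j => ?_⟩
    simpa using congrFun hy (Sum.inl j)
  have last_row_eq : (fromCols (replicateRow Unit w) (of fun _ _ => d))ᵀ =
      replicateCol Unit (Sum.elim w fun _ : Unit => d) := by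
    ext (i | i) <;> rfl
  rw [← fromRows_fromCols_eq_fromBlocks, ← rank_transpose, transpose_fromRows, last_row_eq,
    rank_fromCols_replicateCol_of_notMem_range hw', rank_transpose,
    rank_fromCols_replicateCol_of_notMem_range hu]

end Rank

section Alternating

/-- Alternating matrices: skew-symmetric with zero diagonal, the latter being a separate
condition in characteristic two. -/
structure IsAlt {ι R : Type*} [Ring R] (A : Matrix ι ι R) : Prop where
  transpose_eq_neg : Aᵀ = -A
  diag_eq_zero (i : ι) : A i i = 0

theorem IsAlt.dotProduct_mulVec_self {ι R : Type*} [Fintype ι] [CommRing R] {A : Matrix ι ι R}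
    (hA : IsAlt A) (x : ι → R) : x ⬝ᵥ A *ᵥ x = 0 := by
  have expand : x ⬝ᵥ A *ᵥ x = ∑ p : ι × ι, x p.1 * (A p.1 p.2 * x p.2) := by
    simp only [Fintype.sum_prod_type, mulVec, dotProduct, Finset.mul_sum]
  classical
  rw [expand]
  refine Finset.sum_involution (fun p _ => p.swap) ?_ ?_ ?_ ?_
  · rintro ⟨i, j⟩ -
    have hji : A j i = -A i j := congrFun₂ hA.transpose_eq_neg i j
    simp only [Prod.swap, hji]
    ring
  · rintro ⟨i, j⟩ - hne hswap
    obtain rfl : j = i := congrArg Prod.fst hswap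
    simp [hA.diag_eq_zero] at hne
  · simp
  · simp

/-- The matrix `A` bordered by the column `u`, the row `-u` and a zero corner. It extends an
alternating matrix to an alternating matrix with one more row and column. -/
def altBorder {ι R : Type*} [Ring R] (A : Matrix ι ι R) (u : ι → R) :
    Matrix (ι ⊕ Unit) (ι ⊕ Unit) R :=
  fromBlocks A (replicateCol Unit u) (replicateRow Unit (-u)) 0

theorem IsAlt.isAlt_altBorder {ι R : Type*} [Ring R] {A : Matrix ι ι R} (hA : IsAlt A)
    (u : ι → R) : IsAlt (altBorder A u) where
  transpose_eq_neg := by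
    simp only [altBorder, fromBlocks_transpose, fromBlocks_neg, hA.transpose_eq_neg]
    congr 1 <;> ext <;> simp
  diag_eq_zero := by rintro (_ | _) <;> simp [altBorder, hA.diag_eq_zero]

variable {K ι : Type*} [Field K] [Fintype ι] {A : Matrix ι ι K} {u : ι → K}

theorem IsAlt.rank_altBorder_of_mem_range (hA : IsAlt A)
    (hu : u ∈ LinearMap.range A.mulVecLin) : (altBorder A u).rank = A.rank := by
  obtain ⟨x, rfl⟩ := hu
  have factor : altBorder A (A *ᵥ x) = fromBlocks A (A * replicateCol Unit x)
      (replicateRow Unit x * A) (replicateRow Unit x * A * replicateCol Unit x) := by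
    have row_eq : -(A *ᵥ x) = x ᵥ* A := by
      rw [← mulVec_transpose, hA.transpose_eq_neg, neg_mulVec]
    have corner_eq : x ᵥ* A ⬝ᵥ x = 0 := by
      rw [← dotProduct_mulVec, hA.dotProduct_mulVec_self]
    rw [altBorder, row_eq, replicateCol_mulVec, replicateRow_vecMul]
    congr 1
    ext
    rw [← replicateRow_vecMul]
    exact corner_eq.symm
  rw [mulVecLin_apply, factor, rank_fromBlocks_mul_mul]

theorem IsAlt.rank_altBorder_of_notMem_range (hA : IsAlt A)
    (hu : u ∉ LinearMap.range A.mulVecLin) : (altBorder A u).rank = A.rank + 2 := by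
  refine rank_fromBlocks_of_notMem_range 0 hu ?_
  rintro ⟨x, hx⟩
  refine hu ⟨x, ?_⟩
  rwa [mulVecLin_apply, hA.transpose_eq_neg, neg_mulVec, neg_inj] at hx

end Alternating

section Counting

theorem card_mul_card_ker {K V : Type*} [DivisionRing K] [AddCommGroup V] [Module K V]
    [FiniteDimensional K V] {f : V →ₗ[K] K} (hf : f ≠ 0) :
    Nat.card K * Nat.card (LinearMap.ker f) = Nat.card V := by
  rw [Module.natCard_eq_pow_finrank (K := K) (V := V),
    ← Module.Dual.finrank_ker_add_one_of_ne_zero hf, pow_succ', ← Module.natCard_eq_pow_finrank]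

theorem card_mul_card_sumElim_zero_mem {K ι : Type*} [DivisionRing K] [Finite ι]
    {S : Submodule K (ι ⊕ Unit → K)} {w : ι ⊕ Unit → K} (hw : w ∈ S)
    (hw_last : w (Sum.inr ()) ≠ 0) :
    Nat.card K * Nat.card {v : ι → K // Sum.elim v 0 ∈ S} = Nat.card S := by
  let last : S →ₗ[K] K := (LinearMap.proj (Sum.inr ())).domRestrict S
  have last_ne_zero : last ≠ 0 := fun h => hw_last (LinearMap.congr_fun h ⟨w, hw⟩)
  have elim_eq (x : LinearMap.ker last) : Sum.elim (x.1.1 ∘ Sum.inl) 0 = x.1.1 := by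
    ext (_ | _)
    · rfl
    · exact x.2.symm
  let e : {v : ι → K // Sum.elim v 0 ∈ S} ≃ LinearMap.ker last :=
    { toFun v := ⟨⟨Sum.elim v.1 0, v.2⟩, rfl⟩
      invFun x := ⟨x.1.1 ∘ Sum.inl, (elim_eq x).symm ▸ x.1.2⟩
      left_inv _ := rfl
      right_inv x := Subtype.ext (Subtype.ext (elim_eq x)) }
  rw [Nat.card_congr e, card_mul_card_ker last_ne_zero]

theorem card_range_mulVecLin {K m n : Type*} [Field K] [Finite m] [Fintype n]
    (A : Matrix m n K) : Nat.card (LinearMap.range A.mulVecLin) = Nat.card K ^ A.rank :=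
  Module.natCard_eq_pow_finrank

theorem sum_ite_eq_card_mul_add {α R : Type*} [Fintype α] [CommRing R] (p : α → Prop)
    [DecidablePred p] (x y : R) :
    ∑ a, (if p a then x else y) =
      Nat.card {a // p a} * x + (Nat.card α - Nat.card {a // p a}) * y := by
  have ite_eq (a : α) : (if p a then x else y) = y + if p a then x - y else 0 := by
    split_ifs <;> ring
  simp only [ite_eq, Finset.sum_add_distrib, Finset.sum_const, ← Finset.sum_filter,
    Finset.card_univ, nsmul_eq_mul, Nat.card_eq_fintype_card, Fintype.card_subtype]
  ring

section SingleBorder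

variable {K ι : Type*} [Field K] [Fintype ι] {A : Matrix ι ι K}

theorem sumElim_zero_mem_range_altBorder_zero {v : ι → K} :
    Sum.elim v 0 ∈ LinearMap.range (altBorder A 0).mulVecLin ↔
      v ∈ LinearMap.range A.mulVecLin := by
  constructor
  · rintro ⟨x, hx⟩
    refine ⟨x ∘ Sum.inl, ?_⟩
    ext i
    simpa [altBorder, fromBlocks_mulVec] using congrFun hx (Sum.inl i)
  · rintro ⟨x, rfl⟩
    refine ⟨Sum.elim x 0, ?_⟩
    simp [altBorder, fromBlocks_mulVec]

theorem card_mul_card_sumElim_zero_mem_range_altBorder {u : ι → K} (hu : u ≠ 0) :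
    Nat.card K *
        Nat.card {v : ι → K // Sum.elim v 0 ∈ LinearMap.range (altBorder A u).mulVecLin} =
      Nat.card K ^ (altBorder A u).rank := by
  classical
  obtain ⟨i, hi⟩ := Function.ne_iff.1 hu
  rw [← card_range_mulVecLin]
  refine card_mul_card_sumElim_zero_mem
    (w := altBorder A u *ᵥ Pi.single (Sum.inl i) 1) ⟨_, rfl⟩ ?_
  simpa [altBorder] using hi

theorem sum_rank_altBorder_comp {α R : Type*} [Fintype α] [CommRing R] (hA : IsAlt A)
    (φ : α → ι → K) (F : ℕ → R) :
    ∑ a, F (altBorder A (φ a)).rank =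
      Nat.card {a // φ a ∈ LinearMap.range A.mulVecLin} * F A.rank +
        (Nat.card α - Nat.card {a // φ a ∈ LinearMap.range A.mulVecLin}) * F (A.rank + 2) := by
  classical
  have hF (a : α) : F (altBorder A (φ a)).rank =
      if φ a ∈ LinearMap.range A.mulVecLin then F A.rank else F (A.rank + 2) := by
    split_ifs with ha
    · rw [hA.rank_altBorder_of_mem_range ha]
    · rw [hA.rank_altBorder_of_notMem_range ha]
  simp only [hF, sum_ite_eq_card_mul_add]

end SingleBorder

variable {K ι : Type*} [Field K] [Fintype K] [Fintype ι] [DecidableEq ι] {A : Matrix ι ι K}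

theorem sum_rank_altBorder {R : Type*} [CommRing R] (hA : IsAlt A) (F : ℕ → R) :
    ∑ u : ι → K, F (altBorder A u).rank =
      (Nat.card K : R) ^ A.rank * F A.rank +
        ((Nat.card K : R) ^ Fintype.card ι - (Nat.card K : R) ^ A.rank) * F (A.rank + 2) := by
  rw [sum_rank_altBorder_comp hA fun u => u, card_range_mulVecLin]
  simp

theorem sum_rank_altBorder_altBorder_zero {R : Type*} [CommRing R] (hA : IsAlt A) (F : ℕ → R) :
    ∑ v : ι → K, F (altBorder (altBorder A 0) (Sum.elim v 0)).rank =
      (Nat.card K : R) ^ A.rank * F A.rank +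
        ((Nat.card K : R) ^ Fintype.card ι - (Nat.card K : R) ^ A.rank) * F (A.rank + 2) := by
  rw [sum_rank_altBorder_comp (hA.isAlt_altBorder 0) fun v => Sum.elim v 0,
    hA.rank_altBorder_of_mem_range (Submodule.zero_mem _)]
  simp only [sumElim_zero_mem_range_altBorder_zero]
  rw [card_range_mulVecLin]
  simp

theorem sum_rank_altBorder_altBorder_of_ne_zero (hA : IsAlt A) {u : ι → K} (hu : u ≠ 0)
    (F : ℕ → ℚ) :
    ∑ v : ι → K, F (altBorder (altBorder A u) (Sum.elim v 0)).rank =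
      (Nat.card K : ℚ) ^ (altBorder A u).rank / Nat.card K * F (altBorder A u).rank +
        ((Nat.card K : ℚ) ^ Fintype.card ι -
          (Nat.card K : ℚ) ^ (altBorder A u).rank / Nat.card K) *
            F ((altBorder A u).rank + 2) := by
  have card_eq : (Nat.card {v : ι → K //
      Sum.elim v 0 ∈ LinearMap.range (altBorder A u).mulVecLin} : ℚ) =
      (Nat.card K : ℚ) ^ (altBorder A u).rank / Nat.card K := by
    rw [eq_div_iff (by simp), mul_comm]
    exact_mod_cast card_mul_card_sumElim_zero_mem_range_altBorder hu
  rw [sum_rank_altBorder_comp (hA.isAlt_altBorder u) fun v => Sum.elim v 0, card_eq]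
  simp

theorem sum_sum_rank_altBorder_altBorder (hA : IsAlt A) (F : ℕ → ℚ) {q P Q : ℚ}
    (hq : q = Nat.card K) (hP : P = q ^ A.rank) (hQ : Q = q ^ Fintype.card ι) :
    ∑ u : ι → K, ∑ v : ι → K, F (altBorder (altBorder A u) (Sum.elim v 0)).rank =
      (P - P / q + P ^ 2 / q) * F A.rank +
        ((q + 1) * Q * P - (q + q⁻¹) * P ^ 2 - P + P / q) * F (A.rank + 2) +
        (Q - P) * (Q - q * P) * F (A.rank + 4) := by
  -- For `u ≠ 0` the inner sum is a function `H` of the rank of `altBorder A u` alone, so the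
  -- outer sum is a single-border sum of `H` up to a correction at `u = 0`.
  let H (r : ℕ) : ℚ := q ^ r / q * F r + (Q - q ^ r / q) * F (r + 2)
  have sum_sub_H :
      ∑ u : ι → K, (∑ v : ι → K, F (altBorder (altBorder A u) (Sum.elim v 0)).rank -
        H (altBorder A u).rank) = (P - P / q) * (F A.rank - F (A.rank + 2)) := by
    rw [Fintype.sum_eq_single 0]
    · rw [sum_rank_altBorder_altBorder_zero hA,
        hA.rank_altBorder_of_mem_range (Submodule.zero_mem _)]
      simp only [H, hP, hQ, hq]
      ring
    · intro u hu
      rw [sum_rank_altBorder_altBorder_of_ne_zero hA hu, sub_eq_zero]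
      simp only [H, hQ, hq]
  have hq0 : q ≠ 0 := by simp [hq]
  rw [Finset.sum_sub_distrib, sum_rank_altBorder hA, sub_eq_iff_eq_add] at sum_sub_H
  rw [sum_sub_H]
  simp only [H, pow_add, ← hq, ← hP, ← hQ]
  field_simp
  ring

theorem sum_sum_ite_rank_altBorder_altBorder (hA : IsAlt A) (h : ℤ) {q : ℚ}
    (hq : q = Nat.card K) :
    ∑ u : ι → K, ∑ v : ι → K,
        (if ((altBorder (altBorder A u) (Sum.elim v 0)).rank : ℤ) = h then 1 else 0 : ℚ) =
      ((q - 1) * q ^ (h - 1) + q ^ (2 * h - 1)) * (if (A.rank : ℤ) = h then 1 else 0) +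
      ((q + 1) * q ^ (Fintype.card ι + h - 2) - (q ^ 2 + 1) * q ^ (2 * h - 5) -
        (q - 1) * q ^ (h - 3)) * (if (A.rank : ℤ) = h - 2 then 1 else 0) +
      (-(q + 1) * q ^ (Fintype.card ι + h - 4) + q ^ (2 * Fintype.card ι : ℤ) + q ^ (2 * h - 7)) *
        (if (A.rank : ℤ) = h - 4 then 1 else 0) := by
  have hq0 : q ≠ 0 := by simp [hq]
  have mul_ite_congr {c t : ℚ} {p p' : Prop} [Decidable p] [Decidable p'] (hp : p ↔ p')
      (hct : p' → c = t) : c * (if p then 1 else 0) = t * (if p' then 1 else 0) := by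
    by_cases hp' : p' <;> simp [hp, hp', hct]
  rw [sum_sum_rank_altBorder_altBorder hA (fun r => if (r : ℤ) = h then 1 else 0) hq rfl rfl]
  congr 1
  · congr 1
    · refine mul_ite_congr Iff.rfl ?_
      rintro rfl
      simp only [two_mul, zpow_sub₀ hq0, zpow_add₀ hq0, zpow_natCast, zpow_one]
      field_simp
    · refine mul_ite_congr (by push_cast; lia) fun hr => ?_
      obtain rfl : h = A.rank + 2 := by lia
      simp only [two_mul, zpow_sub₀ hq0, zpow_add₀ hq0, zpow_natCast, zpow_ofNat]
      field_simp
      ring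
  · refine mul_ite_congr (by push_cast; lia) fun hr => ?_
    obtain rfl : h = A.rank + 4 := by lia
    simp only [two_mul, zpow_sub₀ hq0, zpow_add₀ hq0, zpow_natCast, zpow_ofNat]
    field_simp
    ring

end Counting

section BlockHollow

/-- Skew-symmetric matrices whose diagonal blocks vanish, the blocks being the fibres of `b`. -/
structure IsBlockHollow {ι κ R : Type*} [Ring R] (b : ι → κ) (B : Matrix ι ι R) : Prop where
  transpose_eq_neg : Bᵀ = -B
  apply_eq_zero {i j : ι} (hij : b i = b j) : B i j = 0

theorem IsBlockHollow.isAlt {ι κ R : Type*} [Ring R] {b : ι → κ} {B : Matrix ι ι R}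
    (hB : IsBlockHollow b B) : IsAlt B :=
  ⟨hB.transpose_eq_neg, fun _ => hB.apply_eq_zero rfl⟩

theorem IsBlockHollow.reindex {ι ι' κ κ' R : Type*} [Ring R] {b : ι → κ} {b' : ι' → κ'}
    {B : Matrix ι ι R} (hB : IsBlockHollow b B) (e : ι ≃ ι')
    (he : ∀ i j, b' (e i) = b' (e j) → b i = b j) : IsBlockHollow b' (reindex e e B) where
  transpose_eq_neg := by
    rw [transpose_reindex, hB.transpose_eq_neg]
    rfl
  apply_eq_zero hij := hB.apply_eq_zero (he _ _ (by simpa using hij))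

/-- Adjoining one further block `τ` to the partition `b`: the new matrix is determined by its
old part and by the rectangle with rows in `τ` and columns in `ι`, up to sign. -/
def blockHollowSumEquiv (R : Type*) {ι κ : Type*} [Ring R] (b : ι → κ) (τ : Type*) :
    {A : Matrix ι ι R // IsBlockHollow b A} × Matrix τ ι R ≃
      {B : Matrix (ι ⊕ τ) (ι ⊕ τ) R // IsBlockHollow (Sum.map b fun _ : τ => ()) B} where
  toFun p := ⟨fromBlocks p.1.1 p.2ᵀ (-p.2) 0, by
    rw [fromBlocks_transpose, fromBlocks_neg, p.1.2.transpose_eq_neg]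
    simp, by
    rintro (i | i) (j | j) hij
    · exact p.1.2.apply_eq_zero (Sum.inl_injective hij)
    · cases hij
    · cases hij
    · rfl⟩
  invFun B := (⟨B.1.toBlocks₁₁, by
      ext i j
      exact congrFun₂ B.2.transpose_eq_neg (Sum.inl i) (Sum.inl j),
    fun hij => B.2.apply_eq_zero (congrArg Sum.inl hij)⟩, B.1.toBlocks₁₂ᵀ)
  left_inv _ := rfl
  right_inv := by
    rintro ⟨B, hB⟩
    ext (i | i) (j | j)
    · rfl
    · rfl
    · exact (congrFun₂ hB.transpose_eq_neg (Sum.inl j) (Sum.inr i)).symm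
    · exact (hB.apply_eq_zero (i := Sum.inr i) (j := Sum.inr j) rfl).symm

/-- The number of block-hollow matrices of rank `h` over `K`, for the blocks given by the fibres
of `b`. As for `N2`, the rank is an integer, so that `h - 2` and `h - 4` are not truncated. -/
noncomputable def blockHollowCount (K : Type*) {ι κ : Type*} [Field K] [Fintype ι] (b : ι → κ)
    (h : ℤ) : ℕ :=
  Nat.card {B : Matrix ι ι K // IsBlockHollow b B ∧ (B.rank : ℤ) = h}

theorem blockHollowCount_eq_sum {K ι κ : Type*} [Field K] [Fintype ι] (b : ι → κ)
    [Fintype {B : Matrix ι ι K // IsBlockHollow b B}] (h : ℤ) :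
    blockHollowCount K b h =
      ∑ B : {B : Matrix ι ι K // IsBlockHollow b B}, if (B.1.rank : ℤ) = h then 1 else 0 := by
  rw [blockHollowCount, ← Nat.card_congr (Equiv.subtypeSubtypeEquivSubtypeInter _ _),
    Nat.card_eq_fintype_card, Fintype.card_subtype, Finset.card_filter]

theorem blockHollowCount_congr {K ι ι' κ κ' : Type*} [Field K] [Fintype ι] [Fintype ι']
    {b : ι → κ} {b' : ι' → κ'} (e : ι ≃ ι') (he : ∀ i j, b' (e i) = b' (e j) ↔ b i = b j)
    (h : ℤ) : blockHollowCount K b h = blockHollowCount K b' h := by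
  refine Nat.card_congr ((reindex e e).subtypeEquiv fun B => ?_)
  rw [rank_reindex]
  refine and_congr_left fun _ => ⟨fun hB => hB.reindex e fun i j => (he i j).1, fun hB => ?_⟩
  simpa using hB.reindex e.symm fun i j hij => by simpa using (he _ _).2 hij

theorem rank_fromBlocks_fin_two {K ι : Type*} [Field K] [Fintype ι] (A : Matrix ι ι K)
    (u v : ι → K) :
    (fromBlocks A (of ![u, v])ᵀ (-of ![u, v]) 0).rank =
      (altBorder (altBorder A u) (Sum.elim v 0)).rank := by
  let e : ι ⊕ Fin 2 ≃ (ι ⊕ Unit) ⊕ Unit :=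
    ((Equiv.refl ι).sumCongr (finTwoEquiv.trans Equiv.boolEquivPUnitSumPUnit)).trans
      (Equiv.sumAssoc ι Unit Unit).symm
  rw [← rank_submatrix (altBorder (altBorder A u) (Sum.elim v 0)) e e]
  congr 1
  ext (i | i) (j | j)
  · rfl
  · fin_cases j <;> rfl
  · fin_cases i <;> rfl
  · fin_cases i <;> fin_cases j <;> first | rfl | exact neg_zero.symm

theorem sum_matrix_fin_two {R M ι : Type*} [Fintype R] [Fintype ι] [DecidableEq ι]
    [AddCommMonoid M] (f : Matrix (Fin 2) ι R → M) :
    ∑ C, f C = ∑ u, ∑ v, f (of ![u, v]) := by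
  rw [← Fintype.sum_prod_type', ← ((finTwoArrowEquiv (ι → R)).symm.trans of).sum_comp]
  rfl

theorem stmt_12_general {K ι κ : Type*} [Field K] [Finite K] [Fintype ι] (b : ι → κ) (h : ℤ)
    {q : ℚ} (hq : q = Nat.card K) :
    (blockHollowCount K (Sum.map b fun _ : Fin 2 => ()) h : ℚ) =
      ((q - 1) * q ^ (h - 1) + q ^ (2 * h - 1)) * blockHollowCount K b h +
      ((q + 1) * q ^ (Fintype.card ι + h - 2) - (q ^ 2 + 1) * q ^ (2 * h - 5) -
        (q - 1) * q ^ (h - 3)) * blockHollowCount K b (h - 2) +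
      (-(q + 1) * q ^ (Fintype.card ι + h - 4) + q ^ (2 * Fintype.card ι : ℤ) + q ^ (2 * h - 7)) *
        blockHollowCount K b (h - 4) := by
  classical
  have := Fintype.ofFinite K
  simp only [blockHollowCount_eq_sum, ← (blockHollowSumEquiv K b (Fin 2)).sum_comp,
    Fintype.sum_prod_type]
  push_cast
  simp only [Finset.mul_sum, ← Finset.sum_add_distrib]
  refine Finset.sum_congr rfl fun A _ => ?_
  rw [← sum_sum_ite_rank_altBorder_altBorder A.2.isAlt h hq, sum_matrix_fin_two]
  simp only [← rank_fromBlocks_fin_two]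
  rfl

end BlockHollow

theorem N2_eq_blockHollowCount (m : ℕ) (h : ℤ) :
    N2 m h = blockHollowCount (ZMod 2) (fun i : Fin (2 * m) => (i : ℕ) / 2) h := by
  refine Nat.card_congr (Equiv.subtypeEquivRight fun B => ?_)
  rw [← and_assoc]
  refine and_congr_left fun _ =>
    ⟨fun hB => ⟨?_, hB.2 _ _⟩, fun hB => ⟨fun i j => ?_, fun _ _ => hB.2⟩⟩
  · ext i j
    simp [hB.1 j i]
  · simpa using congrFun₂ hB.1 j i

theorem N2_succ_eq_blockHollowCount (m : ℕ) (h : ℤ) :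
    N2 (m + 1) h = blockHollowCount (ZMod 2)
      (Sum.map (fun i : Fin (2 * m) => (i : ℕ) / 2) fun _ : Fin 2 => ()) h := by
  rw [N2_eq_blockHollowCount]
  refine (blockHollowCount_congr finSumFinEquiv ?_ h).symm
  rintro (i | i) (j | j) <;> simp <;> lia

/-- the recurrence for `N₂(m,h)`, `m ≥ 2`, `1 ≤ h ≤ 2m`. -/
theorem stmt_12 (m : ℕ) (hm : 2 ≤ m) (h : ℤ) (h1 : 1 ≤ h) (h2 : h ≤ 2 * (m : ℤ)) :
    (N2 m h : ℚ) =
      ((2 : ℚ) ^ (h - 1) + 2 ^ (2 * h - 1)) * N2 (m - 1) h +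
      (3 * (2 : ℚ) ^ (2 * (m : ℤ) - 4 + h) - 5 * 2 ^ (2 * h - 5) - 2 ^ (h - 3)) *
        N2 (m - 1) (h - 2) +
      (-3 * (2 : ℚ) ^ (2 * (m : ℤ) - 6 + h) + 2 ^ (4 * (m : ℤ) - 4) + 2 ^ (2 * h - 7)) *
        N2 (m - 1) (h - 4) := by
  obtain ⟨k, rfl⟩ : ∃ k, m = k + 1 := ⟨m - 1, by lia⟩
  rw [Nat.add_sub_cancel, N2_succ_eq_blockHollowCount,
    stmt_12_general _ h (q := 2) (by simp), Fintype.card_fin]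
  simp only [N2_eq_blockHollowCount]
  push_cast
  ring_nf
end

section
/- For integers μ ≥ 1 and h, let N₃(μ,h) denote the number of symmetric 3μ×3μ matrices over ZMod 2, with all μ diagonal 3×3 blocks zero, that have rank exactly h (so N₃(μ,h) = 0 if h < 0 or h > 3μ, and N₃(μ,0) = 1). Then for every m ≥ 2 and every 1 ≤ h ≤ 3m, the following identity holds in ℚ: N₃(m,h) = t₁·N₃(m−1,h) + t₂·N₃(m−1,h−2) + t₃·N₃(m−1,h−4) + t₄·N₃(m−1,h−6), where t₁ = 2^{3h−3} + 7·2^{2h−3}; t₂ = (2^{3m−3} − 2^{h−2})·(2^{2h−3} + 2^{h} + 1) + (2^{3m−3} − 2^{h−3})·(2^{2h−4} + 2^{h−1} − 3) + (2^{3m−3} − 2^{h−4})·(2^{2h−5} − 5·2^{h−3} + 2); t₃ = (2^{3m−3} − 2^{h−4})·(7·2^{3m+h−7} − 21·2^{2h−9} − 7·2^{h−5}); and t₄ = ∏_{i=4}^{6} (2^{3m−3} − 2^{h−i}); with 2^k denoting the rational power of 2 (the exponent k ∈ ℤ may be negative). -/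
/-- `N₃(μ,h)`: the number of symmetric `3μ × 3μ` matrices over `ZMod 2`, with all `μ`
diagonal `3 × 3` blocks zero, of rank exactly `h` (automatically `0` for `h < 0` or
`h > 3μ`). -/
noncomputable def N3 (mu : ℕ) (h : ℤ) : ℕ :=
  Nat.card {B : Matrix (Fin (3 * mu)) (Fin (3 * mu)) (ZMod 2) //
    (∀ i j, B i j = B j i) ∧
    (∀ i j : Fin (3 * mu), (i : ℕ) / 3 = (j : ℕ) / 3 → B i j = 0) ∧
    (B.rank : ℤ) = h}

/-!
A matrix with `μ + 1` vanishing diagonal blocks is one with `μ` vanishing diagonal blocks, `B`,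
bordered by an arbitrary block row `X` and the corresponding columns, and `X` can be adjoined one
row at a time.

If `A` is alternating, then bordering it by a row `v` and the column `-v` keeps the rank when `v`
lies in the column space of `A`, because `v = A y` makes the new corner entry `yᵀ A y = 0`;
otherwise the rank grows by `2`. Since the corner block of the bordered matrix vanishes, a new row
has the shape `(x, 0)`. The columns of the bordered matrix project onto the column space of `X`, so
if the bordered matrix has rank `r` and `X` has rank `s`, then the `x` which keep the rank form a
space of dimension `r - s`; it contains the row space of `X`, which has dimension `s`. Hence
`(r, s)` is a Markov chain: of the `N` possible rows, `q ^ s` lead to `(r, s)`,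
`q ^ (r - s) - q ^ s` to `(r, s + 1)`, and the remaining ones to `(r + 2, s + 1)`.

Over `ZMod 2` a symmetric matrix with zero diagonal is alternating, and three steps of the chain
from `(r, 0)` give the coefficients `t₁, …, t₄`.
-/
open Matrix Module

section Rank

variable {K : Type*} [Field K]

open Classical in
theorem finrank_span_insert {V : Type*} [AddCommGroup V] [Module K V] [Module.Finite K V]
    (s : Set V) (w : V) :
    finrank K (Submodule.span K (insert w s)) =
      finrank K (Submodule.span K s) + if w ∈ Submodule.span K s then 0 else 1 := by
  split_ifs with hw
  · rw [Submodule.span_insert_eq_span hw, add_zero]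
  · rw [Submodule.span_insert, sup_comm, Submodule.finrank_sup_span_singleton hw]

theorem finrank_map_snd_add_finrank_comap_inl {V W : Type*} [AddCommGroup V] [Module K V]
    [AddCommGroup W] [Module K W] [Module.Finite K V] [Module.Finite K W]
    (U : Submodule K (V × W)) :
    finrank K (U.map (LinearMap.snd K V W)) + finrank K (U.comap (LinearMap.inl K V W)) =
      finrank K U := by
  have key : (LinearMap.ker ((LinearMap.snd K V W).domRestrict U)).map U.subtype =
      (U.comap (LinearMap.inl K V W)).map (LinearMap.inl K V W) := by
    rw [LinearMap.ker_domRestrict, Submodule.map_comap_subtype, Submodule.map_comap_eq,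
      LinearMap.range_inl, inf_comm]
  rw [← LinearMap.finrank_range_add_finrank_ker ((LinearMap.snd K V W).domRestrict U),
    LinearMap.range_domRestrict, ← Submodule.finrank_map_subtype_eq U, key,
    (Submodule.equivMapOfInjective (LinearMap.inl K V W) LinearMap.inl_injective _).finrank_eq]

variable {l m n : Type*} [Fintype n]

open Classical in
theorem rank_of_range_row_eq_insert [Finite l] [Finite m] {A : Matrix l n K} {A' : Matrix m n K}
    {w : n → K} (h : Set.range A'.row = insert w (Set.range A.row)) :
    A'.rank = A.rank + if w ∈ Submodule.span K (Set.range A.row) then 0 else 1 := by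
  rw [rank_eq_finrank_span_row, rank_eq_finrank_span_row, h, finrank_span_insert]

open Classical in
theorem rank_of_vecCons {k : ℕ} (X : Matrix (Fin k) n K) (x : n → K) :
    (of (vecCons x X.row)).rank =
      X.rank + if x ∈ Submodule.span K (Set.range X.row) then 0 else 1 :=
  rank_of_range_row_eq_insert (Fin.range_cons x X)

open Classical in
theorem rank_fromRows_replicateRow [Finite m] (A : Matrix m n K) (w : n → K) :
    (fromRows A (replicateRow Unit w)).rank =
      A.rank + if w ∈ Submodule.span K (Set.range A.row) then 0 else 1 := by
  apply rank_of_range_row_eq_insert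
  ext z
  simp only [Set.mem_range, Sum.exists, Set.mem_insert_iff]
  aesop

open Classical in
theorem rank_fromCols_replicateCol [Finite l] (A : Matrix l n K) (v : l → K) :
    (fromCols A (replicateCol Unit v)).rank =
      A.rank + if v ∈ LinearMap.range A.mulVecLin then 0 else 1 := by
  cases nonempty_fintype l
  rw [← rank_transpose, transpose_fromCols, transpose_replicateCol, rank_fromRows_replicateRow,
    rank_transpose, range_mulVecLin]
  rfl

end Rank

/-- The matrix of an alternating bilinear form. The vanishing of the diagonal is a separate
condition because skew-symmetry does not imply it in characteristic two. -/
structure IsAlternatingMatrix {K n : Type*} [Ring K] (A : Matrix n n K) : Prop where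
  transpose_eq_neg : Aᵀ = -A
  diag_eq_zero : ∀ i, A i i = 0

/-- The matrix `B` bordered by the rows of `X` below and the negatives of the corresponding columns
on the right, with a zero block in the corner. -/
def borderedMatrix {K n ι : Type*} [Ring K] (B : Matrix n n K) (X : Matrix ι n K) :
    Matrix (n ⊕ ι) (n ⊕ ι) K :=
  fromBlocks B (-Xᵀ) X 0

/-- Splits off the first of the `k + 1` border indices as a border of its own. -/
def sumFinSuccEquiv (n : Type*) (k : ℕ) : n ⊕ Fin (k + 1) ≃ (n ⊕ Fin k) ⊕ Unit :=
  ((Equiv.refl n).sumCongr ((finSuccEquiv k).trans (Equiv.optionEquivSumPUnit _))).trans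
    (Equiv.sumAssoc n (Fin k) Unit).symm

theorem borderedMatrix_vecCons {K n : Type*} [Ring K] {k : ℕ} (B : Matrix n n K)
    (X : Matrix (Fin k) n K) (x : n → K) :
    borderedMatrix B (of (vecCons x X.row)) =
      (borderedMatrix (borderedMatrix B X) (replicateRow Unit (Sum.elim x 0))).submatrix
        (sumFinSuccEquiv n k) (sumFinSuccEquiv n k) := by
  ext i j
  rcases i with i | i <;> rcases j with j | j
  · rfl
  · cases j using Fin.cases <;> rfl
  · cases i using Fin.cases <;> rfl
  · cases i using Fin.cases <;> cases j using Fin.cases <;>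
      first | rfl | exact neg_zero.symm

namespace IsAlternatingMatrix

theorem submatrix {K m n : Type*} [Ring K] {A : Matrix n n K} (hA : IsAlternatingMatrix A)
    (f : m → n) : IsAlternatingMatrix (A.submatrix f f) where
  transpose_eq_neg := by rw [transpose_submatrix, hA.transpose_eq_neg, submatrix_neg]; rfl
  diag_eq_zero i := hA.diag_eq_zero (f i)

theorem bordered {K n ι : Type*} [Ring K] {B : Matrix n n K} (hB : IsAlternatingMatrix B)
    (X : Matrix ι n K) : IsAlternatingMatrix (borderedMatrix B X) where
  transpose_eq_neg := by
    simp [borderedMatrix, fromBlocks_transpose, fromBlocks_neg, hB.transpose_eq_neg]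
  diag_eq_zero i := by
    cases i <;> simp [borderedMatrix, hB.diag_eq_zero]

variable {K n : Type*} [Field K] [Fintype n] {A : Matrix n n K}

theorem dotProduct_mulVec_self (hA : IsAlternatingMatrix A) (y : n → K) :
    y ⬝ᵥ (A *ᵥ y) = 0 := by
  have expand : y ⬝ᵥ (A *ᵥ y) = ∑ p : n × n, y p.1 * (A p.1 p.2 * y p.2) := by
    simp only [dotProduct, mulVec, Finset.mul_sum, Fintype.sum_prod_type]
  have entry_swap (i j : n) : A j i = -A i j := congrFun (congrFun hA.transpose_eq_neg i) j
  classical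
  rw [expand]
  refine Finset.sum_involution (fun p _ => p.swap) ?_ ?_ (by simp) (by simp)
  · rintro ⟨i, j⟩ -
    rw [Prod.swap_prod_mk, entry_swap i j]
    ring
  · rintro ⟨i, j⟩ - hne hswap
    obtain rfl : j = i := congrArg Prod.fst hswap
    simp [hA.diag_eq_zero] at hne

theorem vecMul_eq_mulVec_neg (hA : IsAlternatingMatrix A) (y : n → K) : y ᵥ* A = A *ᵥ (-y) := by
  rw [← mulVec_transpose, hA.transpose_eq_neg, neg_mulVec, mulVec_neg]

theorem mem_span_row_fromCols_iff (hA : IsAlternatingMatrix A) (v : n → K) :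
    Sum.elim v 0 ∈ Submodule.span K (Set.range (fromCols A (replicateCol Unit (-v))).row) ↔
      v ∈ LinearMap.range A.mulVecLin := by
  rw [← range_vecMulLinear]
  constructor
  · rintro ⟨y, hy⟩
    refine ⟨-y, ?_⟩
    rw [mulVecLin_apply, ← hA.vecMul_eq_mulVec_neg]
    rw [vecMulLinear_apply, vecMul_fromCols] at hy
    exact congrArg (fun z => z ∘ Sum.inl) hy
  · rintro ⟨y, rfl⟩
    refine ⟨-y, ?_⟩
    rw [vecMulLinear_apply, vecMul_fromCols, hA.vecMul_eq_mulVec_neg, neg_neg, mulVecLin_apply]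
    congr 1
    ext
    -- the coordinate in the adjoined column vanishes because `A` is alternating
    change -y ⬝ᵥ -(A *ᵥ y) = 0
    rw [neg_dotProduct_neg, hA.dotProduct_mulVec_self]

open Classical in
theorem rank_bordered_replicateRow (hA : IsAlternatingMatrix A) (v : n → K) :
    (borderedMatrix A (replicateRow Unit v)).rank =
      A.rank + if v ∈ LinearMap.range A.mulVecLin then 0 else 2 := by
  have hcol : -(replicateRow Unit v)ᵀ = replicateCol Unit (-v) := rfl
  have hrow : fromCols (replicateRow Unit v) (0 : Matrix Unit Unit K) =
      replicateRow Unit (Sum.elim v 0) := by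
    ext _ (_ | _) <;> rfl
  rw [borderedMatrix, ← fromRows_fromCols_eq_fromBlocks, hrow, hcol, rank_fromRows_replicateRow,
    rank_fromCols_replicateCol, neg_mem_iff, hA.mem_span_row_fromCols_iff]
  split_ifs <;> rfl

end IsAlternatingMatrix

section BorderOneRow

variable {K n ι : Type*} [Field K] [Fintype n] [Fintype ι]

/-- The vectors `x` such that `x`, extended by zero, lies in the column space of
`borderedMatrix B X`: these are the further rows which do not increase the rank of the bordered
matrix. -/
def rankPreservingRows (B : Matrix n n K) (X : Matrix ι n K) : Submodule K (n → K) :=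
  ((LinearMap.range (borderedMatrix B X).mulVecLin).map
    (LinearEquiv.sumArrowLequivProdArrow n ι K K).toLinearMap).comap (LinearMap.inl K _ _)

theorem mem_rankPreservingRows_iff {B : Matrix n n K} {X : Matrix ι n K} {x : n → K} :
    x ∈ rankPreservingRows B X ↔
      Sum.elim x 0 ∈ LinearMap.range (borderedMatrix B X).mulVecLin := by
  rw [rankPreservingRows, Submodule.mem_comap, Submodule.mem_map_equiv]
  rfl

theorem map_snd_range_borderedMatrix (B : Matrix n n K) (X : Matrix ι n K) :
    ((LinearMap.range (borderedMatrix B X).mulVecLin).map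
      (LinearEquiv.sumArrowLequivProdArrow n ι K K).toLinearMap).map (LinearMap.snd K _ _) =
      LinearMap.range X.mulVecLin := by
  ext z
  simp only [Submodule.mem_map, LinearMap.mem_range, exists_exists_eq_and, mulVecLin_apply]
  constructor
  · rintro ⟨y, rfl⟩
    refine ⟨y ∘ Sum.inl, ?_⟩
    ext j
    simp [borderedMatrix, fromBlocks_mulVec]
  · rintro ⟨y, rfl⟩
    refine ⟨Sum.elim y 0, ?_⟩
    ext j
    simp [borderedMatrix, fromBlocks_mulVec]

theorem rank_add_finrank_rankPreservingRows (B : Matrix n n K) (X : Matrix ι n K) :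
    X.rank + finrank K (rankPreservingRows B X) = (borderedMatrix B X).rank := by
  have h := finrank_map_snd_add_finrank_comap_inl
    ((LinearMap.range (borderedMatrix B X).mulVecLin).map
      (LinearEquiv.sumArrowLequivProdArrow n ι K K).toLinearMap)
  rwa [map_snd_range_borderedMatrix, LinearEquiv.finrank_map_eq] at h

theorem span_row_le_rankPreservingRows (B : Matrix n n K) (X : Matrix ι n K) :
    Submodule.span K (Set.range X.row) ≤ rankPreservingRows B X := by
  classical
  rw [Submodule.span_le]
  rintro _ ⟨i, rfl⟩
  refine mem_rankPreservingRows_iff.2 ⟨Pi.single (Sum.inr i) (-1), ?_⟩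
  ext (j | j) <;> simp [borderedMatrix]

open Classical in
theorem rank_borderedMatrix_vecCons {B : Matrix n n K} (hB : IsAlternatingMatrix B)
    {k : ℕ} (X : Matrix (Fin k) n K) (x : n → K) :
    (borderedMatrix B (of (vecCons x X.row))).rank =
      (borderedMatrix B X).rank + if x ∈ rankPreservingRows B X then 0 else 2 := by
  rw [borderedMatrix_vecCons, rank_submatrix, (hB.bordered X).rank_bordered_replicateRow]
  simp only [mem_rankPreservingRows_iff]

theorem rank_borderedMatrix_of_isEmpty [IsEmpty ι] (B : Matrix n n K) (X : Matrix ι n K) :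
    (borderedMatrix B X).rank = B.rank := by
  rw [← rank_submatrix B (Equiv.sumEmpty n ι) (Equiv.sumEmpty n ι)]
  congr 1
  ext (i | i) (j | j)
  · rfl
  all_goals exact isEmptyElim ‹ι›

end BorderOneRow

section RankTransition

/-- One step of the backward equation of the Markov chain `(rank of borderedMatrix B X, rank of X)`
driven by adjoining a row to `X`, over a field with `q` elements and with `N` possible rows: the
rows in the row space of `X` change neither rank, the other rank-preserving rows change only the
second one, and the remaining rows change both. -/
def rankTransition (q N : ℚ) (f : ℕ → ℕ → ℚ) (r s : ℕ) : ℚ :=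
  q ^ s * f r s + (q ^ r / q ^ s - q ^ s) * f r (s + 1) + (N - q ^ r / q ^ s) * f (r + 2) (s + 1)

theorem sum_matrix_fin_succ {K n : Type*} [Fintype K] [Fintype n] [DecidableEq n] {k : ℕ}
    {M : Type*} [AddCommMonoid M] (g : Matrix (Fin (k + 1)) n K → M) :
    ∑ X, g X = ∑ X : Matrix (Fin k) n K, ∑ x : n → K, g (of (vecCons x X.row)) := by
  let e : (n → K) × Matrix (Fin k) n K ≃ Matrix (Fin (k + 1)) n K :=
    ((Equiv.refl _).prodCongr of.symm).trans ((Fin.consEquiv fun _ => n → K).trans of)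
  rw [← e.sum_comp, Fintype.sum_prod_type_right]
  rfl

variable {K : Type*} [Field K] [Fintype K]

theorem card_filter_mem_submodule {V : Type*} [AddCommGroup V] [Module K V] [Fintype V]
    (p : Submodule K V) [DecidablePred (· ∈ p)] :
    Finset.card {x | x ∈ p} = Fintype.card K ^ finrank K p := by
  rw [← Fintype.card_subtype]
  exact card_eq_pow_finrank

variable {n : Type*} [Fintype n] [DecidableEq n] {B : Matrix n n K}

theorem sum_rank_borderedMatrix_vecCons (hB : IsAlternatingMatrix B) {k : ℕ}
    (X : Matrix (Fin k) n K) (f : ℕ → ℕ → ℚ) :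
    ∑ x : n → K, f (borderedMatrix B (of (vecCons x X.row))).rank (of (vecCons x X.row)).rank =
      rankTransition (Fintype.card K) (Fintype.card K ^ Fintype.card n) f
        (borderedMatrix B X).rank X.rank := by
  classical
  set r := (borderedMatrix B X).rank with hr
  set s := X.rank with hs
  have hq : (Fintype.card K : ℚ) ≠ 0 := Nat.cast_ne_zero.2 Fintype.card_ne_zero
  have card_span : (Finset.card {x | x ∈ Submodule.span K (Set.range X.row)} : ℚ) =
      Fintype.card K ^ s := by
    rw [card_filter_mem_submodule, ← rank_eq_finrank_span_row, Nat.cast_pow]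
  have card_preserving : (Finset.card {x | x ∈ rankPreservingRows B X} : ℚ) =
      Fintype.card K ^ r / Fintype.card K ^ s := by
    rw [card_filter_mem_submodule, hr, ← rank_add_finrank_rankPreservingRows B X, pow_add,
      mul_div_cancel_left₀ _ (pow_ne_zero _ hq), Nat.cast_pow]
  have summand (x : n → K) :
      f (borderedMatrix B (of (vecCons x X.row))).rank (of (vecCons x X.row)).rank =
        (if x ∈ Submodule.span K (Set.range X.row) then f r s - f r (s + 1) else 0) +
        (if x ∈ rankPreservingRows B X then f r (s + 1) - f (r + 2) (s + 1) else 0) +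
        f (r + 2) (s + 1) := by
    rw [rank_borderedMatrix_vecCons hB, rank_of_vecCons]
    by_cases hx : x ∈ Submodule.span K (Set.range X.row)
    · have hx' := span_row_le_rankPreservingRows B X hx
      simp only [hx, hx', if_true, add_zero, ← hr, ← hs]
      ring
    · by_cases hx' : x ∈ rankPreservingRows B X <;>
        simp only [hx, hx', if_true, if_false, add_zero, ← hr, ← hs] <;> ring
  simp only [summand, Finset.sum_add_distrib, ← Finset.sum_filter, Finset.sum_const, nsmul_eq_mul,
    card_span, card_preserving, Finset.card_univ, Fintype.card_fun, rankTransition]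
  push_cast
  ring

theorem sum_rank_borderedMatrix_eq_iterate (hB : IsAlternatingMatrix B) (k : ℕ)
    (f : ℕ → ℕ → ℚ) :
    ∑ X : Matrix (Fin k) n K, f (borderedMatrix B X).rank X.rank =
      (rankTransition (Fintype.card K) (Fintype.card K ^ Fintype.card n))^[k] f B.rank 0 := by
  induction k generalizing f with
  | zero =>
    rw [Fintype.sum_subsingleton _ (0 : Matrix (Fin 0) n K), rank_borderedMatrix_of_isEmpty,
      rank_zero]
    rfl
  | succ k ih =>
    rw [sum_matrix_fin_succ, Function.iterate_succ_apply, ← ih]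
    simp only [sum_rank_borderedMatrix_vecCons hB]

end RankTransition

/-- Over a field with `q` elements and with `N` possible rows, the number of ways of adjoining `k`
rows to an `X` of rank `s` such that the rank of `borderedMatrix B X` grows from `r` to `r + 2 * j`;
the argument `R` stands for `q ^ r`, so that the weight is polynomial in it. -/
def borderWeight (q N : ℚ) : ℕ → ℕ → ℕ → ℚ → ℚ
  | 0, 0, _, _ => 1
  | 0, _ + 1, _, _ => 0
  | k + 1, 0, s, R =>
    q ^ s * borderWeight q N k 0 s R + (R / q ^ s - q ^ s) * borderWeight q N k 0 (s + 1) R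
  | k + 1, j + 1, s, R =>
    q ^ s * borderWeight q N k (j + 1) s R +
      (R / q ^ s - q ^ s) * borderWeight q N k (j + 1) (s + 1) R +
      (N - R / q ^ s) * borderWeight q N k j (s + 1) (q ^ 2 * R)

theorem borderWeight_eq_zero_of_lt (q N : ℚ) {k j : ℕ} (hkj : k < j) (s : ℕ) (R : ℚ) :
    borderWeight q N k j s R = 0 := by
  induction k generalizing j s R with
  | zero =>
    obtain ⟨j, rfl⟩ := Nat.exists_eq_succ_of_ne_zero hkj.ne'
    rfl
  | succ k ih =>
    obtain ⟨j, rfl⟩ := Nat.exists_eq_succ_of_ne_zero (Nat.ne_zero_of_lt hkj)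
    simp [borderWeight, ih (show k < j by omega), ih (show k < j + 1 by omega)]

theorem iterate_rankTransition (q N : ℚ) (k : ℕ) (g : ℕ → ℚ) (r s : ℕ) :
    (rankTransition q N)^[k] (fun r _ => g r) r s =
      ∑ j ∈ Finset.range (k + 1), borderWeight q N k j s (q ^ r) * g (r + 2 * j) := by
  induction k generalizing r s with
  | zero => simp [borderWeight]
  | succ k ih =>
    have extend (s : ℕ) :
        ∑ j ∈ Finset.range (k + 1), borderWeight q N k j s (q ^ r) * g (r + 2 * j) =
        ∑ j ∈ Finset.range (k + 1), borderWeight q N k (j + 1) s (q ^ r) * g (r + 2 * (j + 1)) +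
          borderWeight q N k 0 s (q ^ r) * g r := by
      have := Finset.sum_range_succ'
        (fun j => borderWeight q N k j s (q ^ r) * g (r + 2 * j)) (k + 1)
      rwa [Finset.sum_range_succ, borderWeight_eq_zero_of_lt q N k.lt_succ_self, zero_mul,
        add_zero] at this
    have shift (j : ℕ) : r + 2 + 2 * j = r + 2 * (j + 1) := by ring
    rw [Function.iterate_succ_apply', rankTransition, ih, ih, ih, extend, extend,
      Finset.sum_range_succ' _ (k + 1)]
    simp only [borderWeight, shift, pow_add q r 2, mul_comm (q ^ r) (q ^ 2), add_mul,
      Finset.sum_add_distrib, mul_add, Finset.mul_sum, mul_assoc, mul_zero, add_zero]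
    ring

theorem sum_rank_borderedMatrix {K n : Type*} [Field K] [Fintype K] [Fintype n] [DecidableEq n]
    {B : Matrix n n K} (hB : IsAlternatingMatrix B) (k : ℕ) (g : ℕ → ℚ) :
    ∑ X : Matrix (Fin k) n K, g (borderedMatrix B X).rank =
      ∑ j ∈ Finset.range (k + 1),
        borderWeight (Fintype.card K) (Fintype.card K ^ Fintype.card n) k j 0
          (Fintype.card K ^ B.rank) * g (B.rank + 2 * j) := by
  rw [sum_rank_borderedMatrix_eq_iterate hB k fun r _ => g r, iterate_rankTransition]

section ZeroDiagBlocks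

/-- The alternating matrices of size `b * μ` whose `μ` diagonal `b × b` blocks vanish; the index `i`
belongs to block `i / b`. -/
def zeroDiagBlockMatrices (K : Type*) [Ring K] (b μ : ℕ) :
    Set (Matrix (Fin (b * μ)) (Fin (b * μ)) K) :=
  {B | IsAlternatingMatrix B ∧ ∀ i j : Fin (b * μ), (i : ℕ) / b = (j : ℕ) / b → B i j = 0}

/-- The number of alternating matrices of rank `h` whose `μ` diagonal `b × b` blocks vanish. The
rank is an integer so that recurrences may lower it below zero. -/
noncomputable def zeroDiagBlockCount (K : Type*) [Field K] (b μ : ℕ) (h : ℤ) : ℕ :=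
  {B ∈ zeroDiagBlockMatrices K b μ | (B.rank : ℤ) = h}.ncard

/-- The index set of `μ + 1` blocks of size `b`, split into the first `μ` blocks and the last. -/
def lastBlockEquiv (b μ : ℕ) : Fin (b * μ) ⊕ Fin b ≃ Fin (b * (μ + 1)) :=
  finSumFinEquiv

theorem lastBlockEquiv_inl_div_lt {b μ : ℕ} (i : Fin (b * μ)) :
    (lastBlockEquiv b μ (Sum.inl i) : ℕ) / b < μ :=
  Nat.div_lt_of_lt_mul i.isLt

theorem lastBlockEquiv_inr_div {b μ : ℕ} (i : Fin b) :
    (lastBlockEquiv b μ (Sum.inr i) : ℕ) / b = μ := by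
  change (b * μ + i) / b = μ
  rw [Nat.mul_add_div i.pos, Nat.div_eq_of_lt i.isLt, add_zero]

variable {K : Type*} [Ring K] {b μ : ℕ}

theorem borderedMatrix_mem_zeroDiagBlockMatrices {B : Matrix (Fin (b * μ)) (Fin (b * μ)) K}
    (hB : B ∈ zeroDiagBlockMatrices K b μ) (X : Matrix (Fin b) (Fin (b * μ)) K) :
    (borderedMatrix B X).submatrix (lastBlockEquiv b μ).symm (lastBlockEquiv b μ).symm ∈
      zeroDiagBlockMatrices K b (μ + 1) := by
  refine ⟨(hB.1.bordered X).submatrix _, fun i j hij => ?_⟩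
  obtain ⟨i, rfl⟩ := (lastBlockEquiv b μ).surjective i
  obtain ⟨j, rfl⟩ := (lastBlockEquiv b μ).surjective j
  rw [submatrix_apply, Equiv.symm_apply_apply, Equiv.symm_apply_apply]
  rcases i with i | i <;> rcases j with j | j
  · exact hB.2 i j hij
  · exact absurd (hij.trans (lastBlockEquiv_inr_div j)) (lastBlockEquiv_inl_div_lt i).ne
  · exact absurd (hij.symm.trans (lastBlockEquiv_inr_div i)) (lastBlockEquiv_inl_div_lt j).ne
  · rfl

/-- Every alternating matrix with `μ + 1` vanishing diagonal blocks is obtained from one with `μ`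
vanishing diagonal blocks by bordering it with an arbitrary block row. -/
def borderedMatrixEquiv (K : Type*) [Ring K] (b μ : ℕ) :
    zeroDiagBlockMatrices K b μ × Matrix (Fin b) (Fin (b * μ)) K ≃
      zeroDiagBlockMatrices K b (μ + 1) where
  toFun p := ⟨_, borderedMatrix_mem_zeroDiagBlockMatrices p.1.2 p.2⟩
  invFun B :=
    (⟨B.1.submatrix (lastBlockEquiv b μ ∘ Sum.inl) (lastBlockEquiv b μ ∘ Sum.inl),
      B.2.1.submatrix _, fun _ _ hij => B.2.2 _ _ hij⟩,
    B.1.submatrix (lastBlockEquiv b μ ∘ Sum.inr) (lastBlockEquiv b μ ∘ Sum.inl))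
  left_inv := by
    rintro ⟨⟨B, hB⟩, X⟩
    ext i j <;> simp [borderedMatrix]
  right_inv := by
    rintro ⟨B, hB⟩
    ext i j
    obtain ⟨i, rfl⟩ := (lastBlockEquiv b μ).surjective i
    obtain ⟨j, rfl⟩ := (lastBlockEquiv b μ).surjective j
    simp only [submatrix_apply, Equiv.symm_apply_apply]
    rcases i with i | i <;> rcases j with j | j
    · rfl
    · exact (congrFun (congrFun hB.1.transpose_eq_neg _) _).symm
    · rfl
    · exact (hB.2 _ _ ((lastBlockEquiv_inr_div i).trans (lastBlockEquiv_inr_div j).symm)).symm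

end ZeroDiagBlocks

section Recurrence

variable (K : Type*) [Field K]

theorem rank_borderedMatrixEquiv {b μ : ℕ} (B : zeroDiagBlockMatrices K b μ)
    (X : Matrix (Fin b) (Fin (b * μ)) K) :
    (borderedMatrixEquiv K b μ (B, X)).1.rank = (borderedMatrix B.1 X).rank :=
  rank_submatrix _ _ _

variable [Fintype K]

open Classical in
theorem zeroDiagBlockCount_eq_sum (b μ : ℕ) (h : ℤ) :
    (zeroDiagBlockCount K b μ h : ℚ) =
      ∑ B : zeroDiagBlockMatrices K b μ, if (B.1.rank : ℤ) = h then 1 else 0 := by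
  rw [Finset.sum_boole, ← Fintype.card_subtype, ← Nat.card_eq_fintype_card, zeroDiagBlockCount]
  exact congrArg Nat.cast (Nat.card_congr (Equiv.subtypeSubtypeEquivSubtypeInter
    (· ∈ zeroDiagBlockMatrices K b μ) fun B => (B.rank : ℤ) = h).symm)

theorem stmt_13_general (b μ : ℕ) (h : ℤ) :
    (zeroDiagBlockCount K b (μ + 1) h : ℚ) =
      ∑ j ∈ Finset.range (b + 1),
        borderWeight (Fintype.card K) (Fintype.card K ^ (b * μ)) b j 0
          ((Fintype.card K : ℚ) ^ (h - 2 * j)) * zeroDiagBlockCount K b μ (h - 2 * j) := by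
  classical
  simp only [zeroDiagBlockCount_eq_sum, Finset.mul_sum]
  rw [Finset.sum_comm, ← (borderedMatrixEquiv K b μ).sum_comp, Fintype.sum_prod_type]
  refine Finset.sum_congr rfl fun B _ => ?_
  simp only [rank_borderedMatrixEquiv]
  rw [sum_rank_borderedMatrix B.2.1 b fun r => if (r : ℤ) = h then 1 else 0, Fintype.card_fin]
  refine Finset.sum_congr rfl fun j _ => ?_
  have rank_iff : ((B.1.rank + 2 * j : ℕ) : ℤ) = h ↔ (B.1.rank : ℤ) = h - 2 * j := by
    push_cast; omega
  simp only [rank_iff]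
  split_ifs with hr
  · rw [← hr, zpow_natCast]
  · simp only [mul_zero]

end Recurrence

section ThreeByThree

theorem N3_eq_zeroDiagBlockCount (μ : ℕ) (h : ℤ) :
    N3 μ h = zeroDiagBlockCount (ZMod 2) 3 μ h := by
  refine Nat.card_congr (Equiv.subtypeEquivRight fun B => ?_)
  have transpose_iff : Bᵀ = -B ↔ ∀ i j, B i j = B j i := by
    rw [ZModModule.neg_eq_self B]
    exact ⟨fun h i j => congrFun (congrFun h j) i, fun h => Matrix.ext fun i j => h j i⟩
  constructor
  · rintro ⟨hsymm, hdiag, hrank⟩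
    exact ⟨⟨⟨transpose_iff.2 hsymm, fun i => hdiag i i rfl⟩, hdiag⟩, hrank⟩
  · rintro ⟨⟨halt, hdiag⟩, hrank⟩
    exact ⟨transpose_iff.1 halt.transpose_eq_neg, hdiag, hrank⟩

theorem borderWeight_two_three_zero (N : ℚ) (h : ℤ) :
    borderWeight 2 N 3 0 0 (2 ^ h) = 2 ^ (3 * h - 3) + 7 * 2 ^ (2 * h - 3) := by
  simp only [borderWeight, zpow_sub₀ (two_ne_zero (α := ℚ)), _root_.zpow_mul', zpow_ofNat]
  ring

theorem borderWeight_two_three_one (N : ℚ) (h : ℤ) :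
    borderWeight 2 N 3 1 0 (2 ^ (h - 2)) =
      (N - 2 ^ (h - 2)) * (2 ^ (2 * h - 3) + 2 ^ h + 1) +
        (N - 2 ^ (h - 3)) * (2 ^ (2 * h - 4) + 2 ^ (h - 1) - 3) +
        (N - 2 ^ (h - 4)) * (2 ^ (2 * h - 5) - 5 * 2 ^ (h - 3) + 2) := by
  simp only [borderWeight, zpow_sub₀ (two_ne_zero (α := ℚ)), _root_.zpow_mul', zpow_ofNat]
  ring

theorem borderWeight_two_three_two (N : ℚ) (h : ℤ) :
    borderWeight 2 N 3 2 0 (2 ^ (h - 4)) =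
      (N - 2 ^ (h - 4)) * (7 * (N * 2 ^ (h - 4)) - 21 * 2 ^ (2 * h - 9) - 7 * 2 ^ (h - 5)) := by
  simp only [borderWeight, zpow_sub₀ (two_ne_zero (α := ℚ)), _root_.zpow_mul', zpow_ofNat]
  ring

theorem borderWeight_two_three_three (N : ℚ) (h : ℤ) :
    borderWeight 2 N 3 3 0 (2 ^ (h - 6)) = ∏ i ∈ Finset.Icc (4 : ℤ) 6, (N - 2 ^ (h - i)) := by
  rw [show Finset.Icc (4 : ℤ) 6 = {4, 5, 6} by decide, Finset.prod_insert (by decide),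
    Finset.prod_pair (by decide)]
  simp only [borderWeight, zpow_sub₀ (two_ne_zero (α := ℚ)), zpow_ofNat]
  ring

end ThreeByThree

/-- the recurrence for `N₃(m,h)`, `m ≥ 2`, `1 ≤ h ≤ 3m`. -/
theorem stmt_13 (m : ℕ) (hm : 2 ≤ m) (h : ℤ) (h1 : 1 ≤ h) (h2 : h ≤ 3 * (m : ℤ)) :
    (N3 m h : ℚ) =
      ((2 : ℚ) ^ (3 * h - 3) + 7 * 2 ^ (2 * h - 3)) * N3 (m - 1) h +
      (((2 : ℚ) ^ (3 * (m : ℤ) - 3) - 2 ^ (h - 2)) * (2 ^ (2 * h - 3) + 2 ^ h + 1) +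
        ((2 : ℚ) ^ (3 * (m : ℤ) - 3) - 2 ^ (h - 3)) * (2 ^ (2 * h - 4) + 2 ^ (h - 1) - 3) +
        ((2 : ℚ) ^ (3 * (m : ℤ) - 3) - 2 ^ (h - 4)) * (2 ^ (2 * h - 5) - 5 * 2 ^ (h - 3) + 2)) *
        N3 (m - 1) (h - 2) +
      (((2 : ℚ) ^ (3 * (m : ℤ) - 3) - 2 ^ (h - 4)) *
        (7 * (2 : ℚ) ^ (3 * (m : ℤ) + h - 7) - 21 * 2 ^ (2 * h - 9) - 7 * 2 ^ (h - 5))) *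
        N3 (m - 1) (h - 4) +
      (∏ i ∈ Finset.Icc (4 : ℤ) 6, ((2 : ℚ) ^ (3 * (m : ℤ) - 3) - 2 ^ (h - i))) *
        N3 (m - 1) (h - 6) := by
  obtain ⟨n, rfl⟩ := Nat.exists_eq_add_of_le' (Nat.one_le_of_lt hm)
  have card_rows : (2 : ℚ) ^ (3 * ((n + 1 : ℕ) : ℤ) - 3) = 2 ^ (3 * n) := by
    rw [← zpow_natCast]; congr 1; push_cast; ring
  have card_rows_mul : (2 : ℚ) ^ (3 * ((n + 1 : ℕ) : ℤ) + h - 7) = 2 ^ (3 * n) * 2 ^ (h - 4) := by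
    rw [← card_rows, ← zpow_add₀ two_ne_zero]; congr 1; ring
  rw [card_rows_mul, card_rows, ← borderWeight_two_three_zero (2 ^ (3 * n)),
    ← borderWeight_two_three_one, ← borderWeight_two_three_two, ← borderWeight_two_three_three]
  simp only [N3_eq_zeroDiagBlockCount, stmt_13_general, Finset.sum_range_succ,
    Finset.sum_range_zero, ZMod.card, Nat.add_sub_cancel, zero_add]
  norm_num
end
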